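/- arXiv:2201.00816 — 4 statements merged into one kernel-verified Lean document; each statement's English description precedes it below -/
import Mathlib

section
/- Let n ≥ 1 and let p, q be two distinct points of ℍ^n lying on a line parallel to the t-axis (i.e., p and q have the same x- and y-coordinates but different t-coordinates). Then every geodetically convex subset of ℍ^n containing both p and q equals ℍ^n; equivalently, the smallest geodetically convex set containing p and q is the whole space ℍ^n. -/
open MeasureTheory Set Real
open scoped ENNReal NNReal

noncomputable section

/-- Points of the Heisenberg group `ℍⁿ`, written `(x, y, t)` with `x, y ∈ ℝⁿ`, `t ∈ ℝ`. -/
abbrev Hpt (n : ℕ) : Type := (Fin n → ℝ) × (Fin n → ℝ) × ℝ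

/-- The projection of a point of `ℍⁿ` onto the horizontal `z = (x,y)` plane, viewed as a
point of the Euclidean space `ℝ^{2n}` (so that lengths are Euclidean lengths). -/
def hproj {n : ℕ} (p : Hpt n) : EuclideanSpace ℝ (Fin n ⊕ Fin n) :=
  (WithLp.equiv 2 ((Fin n ⊕ Fin n) → ℝ)).symm (Sum.elim p.1 p.2.1)

/-- A curve `γ` is a horizontal curve on `[a,b]` if it is (absolutely continuous, here:
Lipschitz) and almost everywhere it has a derivative `γ' = (x', y', t')` satisfying the
horizontality condition `t' = 2 ∑ⱼ (xⱼ' yⱼ - yⱼ' xⱼ)`. -/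
def IsHorizontal {n : ℕ} (γ : ℝ → Hpt n) (a b : ℝ) : Prop :=
  a ≤ b ∧ (∃ K : NNReal, LipschitzOnWith K γ (Icc a b)) ∧
    ∃ γ' : ℝ → Hpt n,
      (∀ᵐ s ∂(volume.restrict (Icc a b)), HasDerivAt γ (γ' s) s) ∧
      (∀ᵐ s ∂(volume.restrict (Icc a b)),
        (γ' s).2.2 = 2 * ∑ j, ((γ' s).1 j * (γ s).2.1 j - (γ' s).2.1 j * (γ s).1 j))

/-- The length of a horizontal curve on `[a,b]`: the Euclidean length (total variation)
of its projection to the `z`-plane `ℝ^{2n}`. -/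
def hLength {n : ℕ} (γ : ℝ → Hpt n) (a b : ℝ) : ℝ≥0∞ :=
  eVariationOn (fun s => hproj (γ s)) (Icc a b)

/-- The Carnot–Carathéodory distance: the infimum of lengths of horizontal curves
joining `p` to `q`. -/
def ccDist {n : ℕ} (p q : Hpt n) : ℝ≥0∞ :=
  ⨅ (γ : ℝ → Hpt n) (a : ℝ) (b : ℝ) (_ : IsHorizontal γ a b)
    (_ : γ a = p) (_ : γ b = q), hLength γ a b

/-- `γ` is a geodesic on `[a,b]`: a horizontal curve whose length equals the
Carnot–Carathéodory distance between its endpoints. -/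
def IsGeodesicOn {n : ℕ} (γ : ℝ → Hpt n) (a b : ℝ) : Prop :=
  IsHorizontal γ a b ∧ hLength γ a b = ccDist (γ a) (γ b)

/-- A set `A ⊆ ℍⁿ` is geodetically convex if every geodesic connecting any two points of
`A` lies in `A`. -/
def GeodConvexSet {n : ℕ} (A : Set (Hpt n)) : Prop :=
  ∀ p ∈ A, ∀ q ∈ A, ∀ (γ : ℝ → Hpt n) (a b : ℝ),
    IsGeodesicOn γ a b → γ a = p → γ b = q → ∀ s ∈ Icc a b, γ s ∈ A

/-- A function `u : ℍⁿ → ℝ` is geodetically convex if its composition with every geodesic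
is convex. -/
def GeodConvexFun {n : ℕ} (u : Hpt n → ℝ) : Prop :=
  ∀ (γ : ℝ → Hpt n) (a b : ℝ), IsGeodesicOn γ a b → ConvexOn ℝ (Icc a b) (u ∘ γ)

/-- The union of the images of all geodesics connecting pairs of points of `S`. -/
def geodJoin {n : ℕ} (S : Set (Hpt n)) : Set (Hpt n) :=
  {z | ∃ p ∈ S, ∃ q ∈ S, ∃ (γ : ℝ → Hpt n) (a b : ℝ),
    IsGeodesicOn γ a b ∧ γ a = p ∧ γ b = q ∧ z ∈ γ '' Icc a b}

/-- The iterated geodesic hulls `G^m(A)`, with `G^0(A) = A`. -/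
def Gm {n : ℕ} (A : Set (Hpt n)) : ℕ → Set (Hpt n)
  | 0 => A
  | (m + 1) => geodJoin (Gm A m)

lemma ac_mono_aux {F : ℝ → ℝ} {a b : ℝ} (hab : a ≤ b)
    (hF : AbsolutelyContinuousOnInterval F a b)
    (h : ∀ᵐ s ∂(volume.restrict (Icc a b)), 0 ≤ deriv F s) : F a ≤ F b := by
  have h1 := hF.integral_deriv_eq_sub
  have h2 : 0 ≤ ∫ s in a..b, deriv F s := by
    rw [intervalIntegral.integral_of_le hab, ← integral_Icc_eq_integral_Ioc]
    exact integral_nonneg_of_ae h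
  linarith

lemma ac_sum_aux {ι : Type*} (s : Finset ι) {f : ι → ℝ → ℝ} {a b : ℝ}
    (h : ∀ i, AbsolutelyContinuousOnInterval (f i) a b) :
    AbsolutelyContinuousOnInterval (fun x => ∑ i ∈ s, f i x) a b := by
  classical
  induction s using Finset.induction_on with
  | empty =>
    simp only [Finset.sum_empty]
    exact (LipschitzOnWith.absolutelyContinuousOnInterval (K := 0)
      ((LipschitzWith.const (0 : ℝ)).lipschitzOnWith))
  | insert i s hi ih =>
    simp only [Finset.sum_insert hi]
    exact (h i).add ih

lemma pw_aux {n : ℕ} (x y x' y' : Fin n → ℝ) (c k v : ℝ) (hk : 0 ≤ k) (hv : 0 ≤ v)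
    (hv2 : ∑ j, (x' j ^ 2 + y' j ^ 2) ≤ v ^ 2) :
    2 * k * (∑ j, (x' j * y j - y' j * x j) + c * ∑ j, (x j * x' j + y j * y' j)) ≤
      v + k ^ 2 * (1 + c ^ 2) * v * ∑ j, (x j ^ 2 + y j ^ 2) := by
  set Q := ∑ j, (x j ^ 2 + y j ^ 2) with hQ
  have hQ0 : 0 ≤ Q := Finset.sum_nonneg fun j _ => by positivity
  set S := ∑ j, (x' j * y j - y' j * x j) + c * ∑ j, (x j * x' j + y j * y' j) with hS
  have hCS := Finset.sum_mul_sq_le_sq_mul_sq (Finset.univ : Finset (Fin n ⊕ Fin n))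
    (Sum.elim x' y') (Sum.elim (fun j => c * x j + y j) (fun j => c * y j - x j))
  simp only [Fintype.sum_sum_type, Sum.elim_inl, Sum.elim_inr, ← Finset.sum_add_distrib] at hCS
  have e1 : ∑ j, (x' j * (c * x j + y j) + y' j * (c * y j - x j)) = S := by
    rw [hS, Finset.mul_sum, ← Finset.sum_add_distrib]
    exact Finset.sum_congr rfl fun j _ => by ring
  have e2 : ∑ j, ((c * x j + y j) ^ 2 + (c * y j - x j) ^ 2) = (1 + c ^ 2) * Q := by
    rw [hQ, Finset.mul_sum]
    exact Finset.sum_congr rfl fun j _ => by ring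
  rw [e1, e2] at hCS
  set m := √((1 + c ^ 2) * Q) with hm
  have hm2 : m ^ 2 = (1 + c ^ 2) * Q := Real.sq_sqrt (by positivity)
  have hm0 : 0 ≤ m := Real.sqrt_nonneg _
  have hSv : S ≤ v * m := by
    refine le_of_abs_le (abs_le_of_sq_le_sq ?_ (by positivity))
    rw [mul_pow, hm2]
    exact hCS.trans (by gcongr)
  have : 2 * k * S ≤ 2 * k * (v * m) := by gcongr
  have h3 : k ^ 2 * (1 + c ^ 2) * v * Q = k ^ 2 * v * m ^ 2 := by rw [hm2]; ring
  rw [h3]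
  nlinarith [mul_nonneg hv (sq_nonneg (1 - k * m))]

lemma speed_aux {E : Type*} [NormedAddCommGroup E] [NormedSpace ℝ E] {z : ℝ → E} {z' : E}
    {l : ℝ → ℝ} {v s b : ℝ} (hz : HasDerivAt z z' s) (hl : HasDerivAt l v s) (hsb : s < b)
    (h : ∀ u ∈ Ioo s b, ‖z u - z s‖ ≤ l u - l s) : ‖z'‖ ≤ v := by
  have h1 := (hasDerivAt_iff_tendsto_slope.1 hz).mono_left
    (nhdsWithin_mono s (show Ioi s ⊆ {s}ᶜ from fun u hu => ne_of_gt hu))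
  have h2 := (hasDerivAt_iff_tendsto_slope.1 hl).mono_left
    (nhdsWithin_mono s (show Ioi s ⊆ {s}ᶜ from fun u hu => ne_of_gt hu))
  refine le_of_tendsto_of_tendsto h1.norm h2 ?_
  filter_upwards [Ioo_mem_nhdsGT hsb] with u hu
  have hp : 0 < u - s := sub_pos.2 hu.1
  rw [slope_def_module, slope_def_field, norm_smul, norm_inv, Real.norm_of_nonneg hp.le,
    div_eq_inv_mul]
  gcongr
  exact h u hu

lemma cot_deriv_aux (k e u : ℝ) (h : sin (k * u + e) ≠ 0) :
    HasDerivAt (fun u => cos (k * u + e) / sin (k * u + e))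
      (-(k * (1 + (cos (k * u + e) / sin (k * u + e)) ^ 2))) u := by
  have h0 : HasDerivAt (fun u => k * u + e) k u := by
    simpa using ((hasDerivAt_id u).const_mul k).add_const e
  have := (h0.cos).div h0.sin h
  convert! this using 1
  field_simp
  ring

lemma cot_lip_aux (k e L : ℝ) (h : ∀ u ∈ Icc 0 L, sin (k * u + e) ≠ 0) :
    ∃ K, LipschitzOnWith K (fun u => cos (k * u + e) / sin (k * u + e)) (Icc 0 L) := by
  have : ContDiffOn ℝ 1 (fun u => cos (k * u + e) / sin (k * u + e)) (Icc 0 L) := by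
    apply ContDiffOn.div
    · exact ContDiff.contDiffOn (by fun_prop)
    · exact ContDiff.contDiffOn (by fun_prop)
    · exact h
  exact this.exists_lipschitzOnWith (by decide) (convex_Icc _ _) isCompact_Icc

/-- the projection as a continuous linear map -/
def hprojL (n : ℕ) : Hpt n →L[ℝ] EuclideanSpace ℝ (Fin n ⊕ Fin n) :=
  LinearMap.toContinuousLinearMap
    { toFun := hproj
      map_add' := fun p q => by
        ext i; cases i <;> simp [hproj]
      map_smul' := fun c p => by
        ext i; cases i <;> simp [hproj] }

lemma hprojL_apply {n : ℕ} (p : Hpt n) : hprojL n p = hproj p := rfl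

lemma hproj_normsq {n : ℕ} (p : Hpt n) :
    ‖hproj p‖ ^ 2 = ∑ j, (p.1 j ^ 2 + p.2.1 j ^ 2) := by
  rw [EuclideanSpace.norm_sq_eq]
  simp [hproj, Fintype.sum_sum_type, Finset.sum_add_distrib]
lemma lower_aux {n : ℕ} (γ : ℝ → Hpt n) (a b : ℝ) (hγ : IsHorizontal γ a b)
    (x0 y0 : Fin n → ℝ) (t1 t2 : ℝ) (ha : γ a = (x0, y0, t1)) (hb : γ b = (x0, y0, t2)) :
    hLength γ a b ≠ ⊤ ∧ ∀ k : ℝ, 0 < k → k * (hLength γ a b).toReal < π →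
      k * (t2 - t1) ≤ (hLength γ a b).toReal := by
  obtain ⟨hab, ⟨K, hK⟩, γ', hd, hh⟩ := hγ
  set z : ℝ → EuclideanSpace ℝ (Fin n ⊕ Fin n) := fun s => hproj (γ s) with hz
  have hzL : LipschitzOnWith (‖hprojL n‖₊ * K) z (Icc a b) :=
    ((hprojL n).lipschitz.lipschitzOnWith (s := univ)).comp hK (mapsTo_univ _ _)
  have hbv := hzL.locallyBoundedVariationOn
  have ham : a ∈ Icc a b := left_mem_Icc.2 hab
  have hbm : b ∈ Icc a b := right_mem_Icc.2 hab
  have hfin : hLength γ a b ≠ ⊤ := by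
    have := hbv a b ham hbm
    rwa [inter_self] at this
  refine ⟨hfin, fun k hk hkL => ?_⟩
  set L := (hLength γ a b).toReal with hL
  have hL0 : 0 ≤ L := ENNReal.toReal_nonneg
  set l : ℝ → ℝ := fun s => variationOnFromTo z (Icc a b) a s with hl
  have hla : l a = 0 := variationOnFromTo.self _ _ _
  have hlb : l b = L := by
    simp only [hl]
    rw [variationOnFromTo.eq_of_le _ _ hab, inter_self]
    rfl
  have hsub : ∀ s ∈ Icc a b, ∀ u ∈ Icc a b, l u - l s = variationOnFromTo z (Icc a b) s u :=
    fun s hs u hu => variationOnFromTo.sub_right hbv ham hu hs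
  have hlo : ∀ s ∈ Icc a b, ∀ u ∈ Icc a b, s ≤ u → ‖z u - z s‖ ≤ l u - l s := by
    intro s hs u hu hsu
    rw [hsub s hs u hu, variationOnFromTo.eq_of_le _ _ hsu, ← dist_eq_norm, dist_edist]
    refine ENNReal.toReal_mono (hbv s u hs hu) ?_
    exact eVariationOn.edist_le _ ⟨hu, hsu, le_rfl⟩ ⟨hs, le_rfl, hsu⟩
  have hmono : ∀ s ∈ Icc a b, ∀ u ∈ Icc a b, s ≤ u → l s ≤ l u := by
    intro s hs u hu hsu
    have := (norm_nonneg _).trans (hlo s hs u hu hsu)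
    linarith
  have hup : ∀ s ∈ Icc a b, ∀ u ∈ Icc a b, s ≤ u →
      l u - l s ≤ (‖hprojL n‖₊ * K : ℝ≥0) * (u - s) := by
    intro s hs u hu hsu
    rw [hsub s hs u hu, variationOnFromTo.eq_of_le _ _ hsu]
    have h1 : eVariationOn z (Icc a b ∩ Icc s u) ≤
        (‖hprojL n‖₊ * K : ℝ≥0) * eVariationOn (id : ℝ → ℝ) (Icc a b ∩ Icc s u) :=
      (hzL.mono inter_subset_left).comp_eVariationOn_le (f := z) (g := id) (mapsTo_id _)
    have h2 : eVariationOn (id : ℝ → ℝ) (Icc a b ∩ Icc s u) ≤ ENNReal.ofReal (u - s) :=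
      ((monotone_id.monotoneOn _).eVariationOn_eq hs hu).le
    have h3 := h1.trans (mul_le_mul_right h2 _)
    have h4 := ENNReal.toReal_mono (by finiteness) h3
    rwa [ENNReal.toReal_mul, ENNReal.toReal_ofReal (by linarith), ENNReal.coe_toReal] at h4
  have hlL : LipschitzOnWith (‖hprojL n‖₊ * K) l (Icc a b) := by
    refine LipschitzOnWith.of_dist_le_mul fun s hs u hu => ?_
    rcases le_total s u with h | h
    · rw [dist_comm, Real.dist_eq, abs_of_nonneg (sub_nonneg.2 (hmono s hs u hu h)), dist_comm,
        Real.dist_eq, abs_of_nonneg (sub_nonneg.2 h)]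
      exact hup s hs u hu h
    · rw [Real.dist_eq, abs_of_nonneg (sub_nonneg.2 (hmono u hu s hs h)),
        Real.dist_eq, abs_of_nonneg (sub_nonneg.2 h)]
      exact hup u hu s hs h
  have hu : uIcc a b = Icc a b := uIcc_of_le hab
  have hlAC : AbsolutelyContinuousOnInterval l a b :=
    LipschitzOnWith.absolutelyContinuousOnInterval (by rwa [hu])
  have hmaps : MapsTo l (Icc a b) (Icc 0 L) := by
    intro s hs
    exact ⟨hla ▸ hmono a ham s hs hs.1, hlb ▸ hmono s hs b hbm hs.2⟩
  -- the phase
  obtain ⟨e, he⟩ : ∃ e, e = (π - k * L) / 2 := ⟨_, rfl⟩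
  have hsin : ∀ u ∈ Icc 0 L, sin (k * u + e) ≠ 0 := by
    intro u hu
    apply ne_of_gt
    have h1 : 0 ≤ k * u := mul_nonneg hk.le hu.1
    have h2 : k * u ≤ k * L := mul_le_mul_of_nonneg_left hu.2 hk.le
    apply Real.sin_pos_of_pos_of_lt_pi <;> linarith
  set C : ℝ → ℝ := fun u => cos (k * u + e) / sin (k * u + e) with hC
  obtain ⟨KC, hKC⟩ := cot_lip_aux k e L hsin
  have hCAC : AbsolutelyContinuousOnInterval (fun s => C (l s)) a b :=
    LipschitzOnWith.absolutelyContinuousOnInterval (by rw [hu]; exact hKC.comp hlL hmaps)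
  set X : Fin n → ℝ → ℝ := fun j s => (γ s).1 j - x0 j with hX
  set Y : Fin n → ℝ → ℝ := fun j s => (γ s).2.1 j - y0 j with hY
  have hlin : ∀ (f : Hpt n →L[ℝ] ℝ) (c : ℝ),
      AbsolutelyContinuousOnInterval (fun s => f (γ s) - c) a b := by
    intro f c
    have h1 : LipschitzOnWith (‖f‖₊ * K) (fun s => f (γ s)) (uIcc a b) := by
      rw [hu]
      exact (f.lipschitz.lipschitzOnWith (s := univ)).comp hK (mapsTo_univ _ _)
    exact h1.absolutelyContinuousOnInterval.sub
      ((LipschitzWith.const c).lipschitzOnWith.absolutelyContinuousOnInterval)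
  let px : Fin n → (Hpt n →L[ℝ] ℝ) := fun j =>
    (ContinuousLinearMap.proj j).comp (ContinuousLinearMap.fst ℝ _ _)
  let py : Fin n → (Hpt n →L[ℝ] ℝ) := fun j =>
    (ContinuousLinearMap.proj j).comp
      ((ContinuousLinearMap.fst ℝ _ _).comp (ContinuousLinearMap.snd ℝ _ _))
  let pt : Hpt n →L[ℝ] ℝ :=
    (ContinuousLinearMap.snd ℝ _ _).comp (ContinuousLinearMap.snd ℝ _ _)
  have hXAC : ∀ j, AbsolutelyContinuousOnInterval (X j) a b := fun j => hlin (px j) (x0 j)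
  have hYAC : ∀ j, AbsolutelyContinuousOnInterval (Y j) a b := fun j => hlin (py j) (y0 j)
  have htAC : AbsolutelyContinuousOnInterval (fun s => (γ s).2.2 - 0) a b := hlin pt 0
  set Q : ℝ → ℝ := fun s => ∑ j, (X j s * X j s + Y j s * Y j s) with hQ
  have hQAC : AbsolutelyContinuousOnInterval Q a b :=
    ac_sum_aux _ fun j => ((hXAC j).mul (hXAC j)).add ((hYAC j).mul (hYAC j))
  set W : ℝ → ℝ := fun s => ∑ j, (y0 j * X j s - x0 j * Y j s) with hW
  have hWAC : AbsolutelyContinuousOnInterval W a b :=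
    ac_sum_aux _ fun j => ((hXAC j).const_mul _).sub ((hYAC j).const_mul _)
  set F : ℝ → ℝ := fun s => l s - k * (C (l s) * Q s) - k * (((γ s).2.2 - 0) - 2 * W s) with hF
  have hFAC : AbsolutelyContinuousOnInterval F a b :=
    (hlAC.sub ((hCAC.mul hQAC).const_mul k)).sub ((htAC.sub (hWAC.const_mul 2)).const_mul k)
  have hder : ∀ᵐ s ∂(volume.restrict (Icc a b)), 0 ≤ deriv F s := by
    have hld : ∀ᵐ s ∂(volume.restrict (Icc a b)), DifferentiableAt ℝ l s := by
      rw [ae_restrict_iff' measurableSet_Icc]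
      have := hlAC.ae_differentiableAt
      rwa [hu] at this
    have hnb : ∀ᵐ s ∂(volume.restrict (Icc a b)), s ∈ Ico a b := by
      rw [← restrict_Ico_eq_restrict_Icc]
      exact ae_restrict_mem measurableSet_Ico
    filter_upwards [hd, hh, hld, hnb] with s hds hhs hls hs
    have hsm : s ∈ Icc a b := ⟨hs.1, hs.2.le⟩
    set v := deriv l s with hv
    have hlv : HasDerivAt l v s := hls.hasDerivAt
    have hzd : HasDerivAt z (hproj (γ' s)) s := (hprojL n).hasFDerivAt.comp_hasDerivAt s hds
    have hnv : ‖hproj (γ' s)‖ ≤ v := speed_aux hzd hlv hs.2 fun u hu =>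
      hlo s hsm u ⟨hs.1.trans hu.1.le, hu.2.le⟩ hu.1.le
    have hv0 : 0 ≤ v := (norm_nonneg _).trans hnv
    have hv2 : ∑ j, ((γ' s).1 j ^ 2 + (γ' s).2.1 j ^ 2) ≤ v ^ 2 := by
      rw [← hproj_normsq]; gcongr
    have hXd : ∀ j, HasDerivAt (X j) ((γ' s).1 j) s := fun j =>
      ((px j).hasFDerivAt.comp_hasDerivAt s hds).sub_const _
    have hYd : ∀ j, HasDerivAt (Y j) ((γ' s).2.1 j) s := fun j =>
      ((py j).hasFDerivAt.comp_hasDerivAt s hds).sub_const _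
    have htd : HasDerivAt (fun s => (γ s).2.2 - 0) ((γ' s).2.2) s :=
      (pt.hasFDerivAt.comp_hasDerivAt s hds).sub_const _
    have hCd := (cot_deriv_aux k e (l s) (hsin _ (hmaps hsm))).comp s hlv
    have hQd : HasDerivAt Q (∑ j, ((γ' s).1 j * X j s + X j s * (γ' s).1 j +
        ((γ' s).2.1 j * Y j s + Y j s * (γ' s).2.1 j))) s :=
      HasDerivAt.fun_sum fun j _ => ((hXd j).mul (hXd j)).add ((hYd j).mul (hYd j))
    have hWd : HasDerivAt W (∑ j, (y0 j * (γ' s).1 j - x0 j * (γ' s).2.1 j)) s :=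
      HasDerivAt.fun_sum fun j _ => ((hXd j).const_mul _).sub ((hYd j).const_mul _)
    have hFd := (hlv.sub ((hCd.mul hQd).const_mul k)).sub ((htd.sub (hWd.const_mul 2)).const_mul k)
    have hFd' : deriv F s = _ := hFd.deriv
    rw [hFd']
    have key := pw_aux (fun j => X j s) (fun j => Y j s) (γ' s).1 (γ' s).2.1 (C (l s)) k v hk.le
      hv0 hv2
    have e1 : ∑ j, ((γ' s).1 j * X j s + X j s * (γ' s).1 j +
        ((γ' s).2.1 j * Y j s + Y j s * (γ' s).2.1 j)) =
        2 * ∑ j, (X j s * (γ' s).1 j + Y j s * (γ' s).2.1 j) := by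
      rw [Finset.mul_sum]; exact Finset.sum_congr rfl fun j _ => by ring
    have e2 : (γ' s).2.2 - 2 * ∑ j, (y0 j * (γ' s).1 j - x0 j * (γ' s).2.1 j) =
        2 * ∑ j, ((γ' s).1 j * Y j s - (γ' s).2.1 j * X j s) := by
      rw [hhs, ← mul_sub, ← Finset.sum_sub_distrib]
      congr 1
      exact Finset.sum_congr rfl fun j _ => by simp only [hX, hY]; ring
    have e3 : Q s = ∑ j, (X j s ^ 2 + Y j s ^ 2) :=
      Finset.sum_congr rfl fun j _ => by ring
    rw [e1, e2, e3]
    simp only [Function.comp]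
    change 2 * k * (_ + C (l s) * _) ≤ v + k ^ 2 * (1 + (C (l s)) ^ 2) * v * _ at key
    change 0 ≤ v - k * (-(k * (1 + (C (l s)) ^ 2)) * v * _ + C (l s) * _) - _
    linarith
  have hfinal := ac_mono_aux hab hFAC hder
  have hXa : ∀ j, X j a = 0 := fun j => by simp [hX, ha]
  have hYa : ∀ j, Y j a = 0 := fun j => by simp [hY, ha]
  have hXb : ∀ j, X j b = 0 := fun j => by simp [hX, hb]
  have hYb : ∀ j, Y j b = 0 := fun j => by simp [hY, hb]
  simp only [hF, hQ, hW, hXa, hYa, hXb, hYb, hla, hlb, ha, hb] at hfinal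
  simp at hfinal
  linarith

lemma lower_bound {n : ℕ} (γ : ℝ → Hpt n) (a b : ℝ) (hγ : IsHorizontal γ a b)
    (x0 y0 : Fin n → ℝ) (t1 r : ℝ) (hr : 0 < r) (ha : γ a = (x0, y0, t1))
    (hb : γ b = (x0, y0, t1 + 4 * π * r ^ 2)) :
    ENNReal.ofReal (2 * π * r) ≤ hLength γ a b := by
  obtain ⟨hfin, h⟩ := lower_aux γ a b hγ x0 y0 t1 _ ha hb
  rw [ENNReal.ofReal_le_iff_le_toReal hfin]
  set L := (hLength γ a b).toReal with hL
  have hL0 : 0 ≤ L := ENNReal.toReal_nonneg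
  by_contra hlt
  push Not at hlt
  have h1 := h (1 / (2 * r)) (by positivity) (by
    rw [div_mul_eq_mul_div, one_mul, div_lt_iff₀ (by positivity)]; linarith)
  have h2 : 1 / (2 * r) * (t1 + 4 * π * r ^ 2 - t1) = 2 * π * r := by field_simp; ring
  linarith
/-- bracket -/
def om {n : ℕ} (dx dy x y : Fin n → ℝ) : ℝ := ∑ j, (dx j * y j - dy j * x j)

lemma smooth_horizontal {n : ℕ} (X Y X' Y' : Fin n → ℝ → ℝ) (T T' : ℝ → ℝ) (a b : ℝ) (hab : a ≤ b)
    (hX : ∀ j s, HasDerivAt (X j) (X' j s) s) (hY : ∀ j s, HasDerivAt (Y j) (Y' j s) s)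
    (hT : ∀ s, HasDerivAt T (T' s) s)
    (hXc : ∀ j, ContDiff ℝ 1 (X j)) (hYc : ∀ j, ContDiff ℝ 1 (Y j)) (hTc : ContDiff ℝ 1 T)
    (h : ∀ s, T' s = 2 * ∑ j, (X' j s * Y j s - Y' j s * X j s)) (r : ℝ≥0)
    (hr : ∀ s, ∑ j, (X' j s ^ 2 + Y' j s ^ 2) = r ^ 2) :
    IsHorizontal (fun s => ((fun j => X j s, fun j => Y j s, T s) : Hpt n)) a b ∧
    hLength (fun s => ((fun j => X j s, fun j => Y j s, T s) : Hpt n)) a b ≤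
      ENNReal.ofReal (r * (b - a)) := by
  set γ : ℝ → Hpt n := fun s => ((fun j => X j s, fun j => Y j s, T s) : Hpt n) with hγ
  set γ' : ℝ → Hpt n := fun s => ((fun j => X' j s, fun j => Y' j s, T' s) : Hpt n) with hγ'
  have hd : ∀ s, HasDerivAt γ (γ' s) s := fun s =>
    (hasDerivAt_pi.2 fun j => hX j s).prodMk ((hasDerivAt_pi.2 fun j => hY j s).prodMk (hT s))
  have hc : ContDiff ℝ 1 γ :=
    (contDiff_pi.2 fun j => hXc j).prodMk ((contDiff_pi.2 fun j => hYc j).prodMk hTc)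
  constructor
  · refine ⟨hab, hc.contDiffOn.exists_lipschitzOnWith (by decide) (convex_Icc _ _) isCompact_Icc,
      γ', Filter.Eventually.of_forall hd, Filter.Eventually.of_forall h⟩
  · have hL : LipschitzOnWith r (fun s => hproj (γ s)) (Icc a b) := by
      refine Convex.lipschitzOnWith_of_nnnorm_hasDerivWithin_le (f' := fun s => hproj (γ' s))
        (convex_Icc a b) (fun s _ =>
        ((hprojL n).hasFDerivAt.comp_hasDerivAt s (hd s)).hasDerivWithinAt) (fun s _ => ?_)
      rw [← NNReal.coe_le_coe, coe_nnnorm]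
      refine le_of_sq_le_sq ?_ r.2
      rw [hproj_normsq]
      exact (hr s).le
    have h1 : eVariationOn (fun s => hproj (γ s)) (Icc a b) ≤
        r * eVariationOn (id : ℝ → ℝ) (Icc a b) :=
      hL.comp_eVariationOn_le (g := id) (mapsTo_id _)
    have h2 : eVariationOn (id : ℝ → ℝ) (Icc a b) = ENNReal.ofReal (b - a) := by
      have := ((monotone_id (α := ℝ)).monotoneOn (Icc a b)).eVariationOn_eq
        (left_mem_Icc.2 hab) (right_mem_Icc.2 hab)
      rwa [inter_self] at this
    rw [h2] at h1
    refine h1.trans (le_of_eq ?_)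
    rw [ENNReal.ofReal_mul (NNReal.coe_nonneg r), ENNReal.ofReal_coe_nnreal]

lemma geod_of_le {n : ℕ} (γ : ℝ → Hpt n) (a b : ℝ) (h : IsHorizontal γ a b)
    (hle : ∀ (δ : ℝ → Hpt n) (c d : ℝ), IsHorizontal δ c d → δ c = γ a → δ d = γ b →
      hLength γ a b ≤ hLength δ c d) : IsGeodesicOn γ a b := by
  refine ⟨h, le_antisymm ?_ ?_⟩
  · refine le_iInf fun δ => le_iInf fun c => le_iInf fun d => le_iInf fun h1 => le_iInf fun h2 =>
      le_iInf fun h3 => hle δ c d h1 h2 h3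
  · exact iInf_le_of_le γ <| iInf_le_of_le a <| iInf_le_of_le b <| iInf_le_of_le h <|
      iInf_le_of_le rfl <| iInf_le_of_le rfl le_rfl

lemma circ_mem {n : ℕ} {A : Set (Hpt n)} (hA : GeodConvexSet A) (x0 y0 a b : Fin n → ℝ)
    (t1 r : ℝ) (hr : 0 < r) (hab : ∑ j, (a j ^ 2 + b j ^ 2) = r ^ 2)
    (h1 : ((x0, y0, t1) : Hpt n) ∈ A) (h2 : ((x0, y0, t1 + 4 * π * r ^ 2) : Hpt n) ∈ A)
    (φ : ℝ) (hφ : φ ∈ Icc 0 (2 * π)) :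
    ((fun j => x0 j + (a j * (1 - cos φ) - b j * sin φ),
      fun j => y0 j + (b j * (1 - cos φ) + a j * sin φ),
      t1 + 2 * r ^ 2 * (φ - sin φ) + 2 * ∑ j, ((a j * (1 - cos φ) - b j * sin φ) * y0 j -
        (b j * (1 - cos φ) + a j * sin φ) * x0 j)) : Hpt n) ∈ A := by
  have hc : ∀ s, HasDerivAt (fun s => 1 - cos s) (sin s) s := fun s => by
    simpa using (Real.hasDerivAt_cos s).const_sub 1
  have hX0 : ∀ j s, HasDerivAt (fun s => a j * (1 - cos s) - b j * sin s)
      (a j * sin s - b j * cos s) s := fun j s =>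
    ((hc s).const_mul _).sub ((Real.hasDerivAt_sin s).const_mul _)
  have hY0 : ∀ j s, HasDerivAt (fun s => b j * (1 - cos s) + a j * sin s)
      (b j * sin s + a j * cos s) s := fun j s =>
    ((hc s).const_mul _).add ((Real.hasDerivAt_sin s).const_mul _)
  obtain ⟨hH, hLen⟩ := smooth_horizontal
    (fun j s => x0 j + (a j * (1 - cos s) - b j * sin s))
    (fun j s => y0 j + (b j * (1 - cos s) + a j * sin s))
    (fun j s => a j * sin s - b j * cos s) (fun j s => b j * sin s + a j * cos s)
    (fun φ => t1 + 2 * r ^ 2 * (φ - sin φ) + 2 * ∑ j, ((a j * (1 - cos φ) - b j * sin φ) * y0 j -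
        (b j * (1 - cos φ) + a j * sin φ) * x0 j))
    (fun s => 2 * r ^ 2 * (1 - cos s) + 2 * ∑ j, ((a j * sin s - b j * cos s) * y0 j -
        (b j * sin s + a j * cos s) * x0 j)) 0 (2 * π) (by positivity)
    (fun j s => (hX0 j s).const_add _) (fun j s => (hY0 j s).const_add _)
    (fun s => by
      refine HasDerivAt.add ?_ ?_
      · exact (((hasDerivAt_id s).sub (Real.hasDerivAt_sin s)).const_mul _).const_add _
      · refine HasDerivAt.const_mul _ (HasDerivAt.fun_sum fun j _ => ?_)
        exact ((hX0 j s).mul_const _).sub ((hY0 j s).mul_const _))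
    (fun j => by fun_prop) (fun j => by fun_prop) (by fun_prop)
    (fun s => by
      rw [← hab, mul_assoc, ← mul_add, Finset.sum_mul, ← Finset.sum_add_distrib]
      congr 1
      refine Finset.sum_congr rfl fun j _ => ?_
      have := Real.sin_sq_add_cos_sq s
      linear_combination (-(a j) ^ 2 - b j ^ 2) * this)
    ⟨r, hr.le⟩ (fun s => by
      change _ = r ^ 2
      rw [← hab]
      refine Finset.sum_congr rfl fun j _ => ?_
      have := Real.sin_sq_add_cos_sq s
      linear_combination ((a j) ^ 2 + b j ^ 2) * this)
  refine hA _ h1 _ h2 _ 0 (2 * π) (geod_of_le _ _ _ hH ?_) ?_ ?_ φ hφ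
  · intro δ c d hδ hδc hδd
    refine hLen.trans ?_
    refine le_trans (le_of_eq ?_) (lower_bound δ c d hδ x0 y0 t1 r hr ?_ ?_)
    · congr 1
      change r * (2 * π - 0) = _
      ring
    · rw [hδc]; simp
    · rw [hδd]; simp; ring
  · simp
  · simp; ring

lemma seg_mem {n : ℕ} {A : Set (Hpt n)} (hA : GeodConvexSet A) (x0 y0 dx dy : Fin n → ℝ)
    (t : ℝ)
    (h1 : ((x0 + dx, y0 + dy, t + 2 * om dx dy x0 y0) : Hpt n) ∈ A)
    (h2 : ((x0 - dx, y0 - dy, t - 2 * om dx dy x0 y0) : Hpt n) ∈ A) :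
    ((x0, y0, t) : Hpt n) ∈ A := by
  have hq : 0 ≤ ∑ j, (dx j ^ 2 + dy j ^ 2) := Finset.sum_nonneg fun j _ => by positivity
  set r : ℝ≥0 := ⟨√(∑ j, (dx j ^ 2 + dy j ^ 2)), Real.sqrt_nonneg _⟩ with hr
  have hr2 : (r : ℝ) ^ 2 = ∑ j, (dx j ^ 2 + dy j ^ 2) := Real.sq_sqrt hq
  have hl : ∀ c d s : ℝ, HasDerivAt (fun s => c - s * d) (-d) s := fun c d s => by
    simpa using ((hasDerivAt_id s).mul_const d).const_sub c
  obtain ⟨hH, hLen⟩ := smooth_horizontal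
    (fun j s => x0 j - s * dx j) (fun j s => y0 j - s * dy j)
    (fun j s => - dx j) (fun j s => - dy j)
    (fun s => t - s * (2 * om dx dy x0 y0)) (fun s => -(2 * om dx dy x0 y0)) (-1) 1 (by norm_num)
    (fun j s => hl _ _ s) (fun j s => hl _ _ s) (fun s => hl _ _ s)
    (fun j => by fun_prop) (fun j => by fun_prop) (by fun_prop)
    (fun s => by
      rw [om, ← mul_neg, ← Finset.sum_neg_distrib]
      congr 1
      exact Finset.sum_congr rfl fun j _ => by ring)
    r (fun s => by
      rw [hr2]
      exact Finset.sum_congr rfl fun j _ => by ring)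
  have := hA _ h1 _ h2 _ (-1) 1 (geod_of_le _ _ _ hH ?_) ?_ ?_ 0 (by norm_num)
  · simpa using this
  · intro δ c d hδ hδc hδd
    refine hLen.trans ?_
    have h3 := eVariationOn.edist_le (fun s => hproj (δ s)) (left_mem_Icc.2 hδ.1)
      (right_mem_Icc.2 hδ.1)
    refine le_trans (le_of_eq ?_) h3
    simp only [hδc, hδd]
    rw [edist_dist]
    congr 1
    rw [dist_eq_norm, ← hprojL_apply, ← hprojL_apply, ← map_sub, hprojL_apply]
    symm
    rw [← sq_eq_sq₀ (norm_nonneg _) (by positivity), hproj_normsq, mul_pow, hr2, Finset.sum_mul]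
    refine Finset.sum_congr rfl fun j _ => ?_
    simp only [Prod.fst_sub, Prod.snd_sub, Pi.sub_apply]
    ring
  · refine Prod.ext ?_ (Prod.ext ?_ ?_)
    · ext j; simp
    · ext j; simp
    · simp
  · refine Prod.ext ?_ (Prod.ext ?_ ?_)
    · ext j; simp
    · ext j; simp
    · simp
lemma om_neg {n : ℕ} (dx dy x y : Fin n → ℝ) : om (-dx) (-dy) x y = - om dx dy x y := by
  simp only [om, ← Finset.sum_neg_distrib]
  exact Finset.sum_congr rfl fun j _ => by simp only [Pi.neg_apply]; ring

lemma om_neg' {n : ℕ} (dx dy x y : Fin n → ℝ) : om dx dy (-x) (-y) = - om dx dy x y := by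
  simp only [om, ← Finset.sum_neg_distrib]
  exact Finset.sum_congr rfl fun j _ => by simp only [Pi.neg_apply]; ring

lemma om_add {n : ℕ} (dx dy ex ey x y : Fin n → ℝ) :
    om (dx + ex) (dy + ey) x y = om dx dy x y + om ex ey x y := by
  simp only [om, ← Finset.sum_add_distrib]
  exact Finset.sum_congr rfl fun j _ => by simp only [Pi.add_apply]; ring

lemma om_add' {n : ℕ} (dx dy x y u w : Fin n → ℝ) :
    om dx dy (x + u) (y + w) = om dx dy x y + om dx dy u w := by
  simp only [om, ← Finset.sum_add_distrib]
  exact Finset.sum_congr rfl fun j _ => by simp only [Pi.add_apply]; ring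

lemma seg_mem' {n : ℕ} {A : Set (Hpt n)} (hA : GeodConvexSet A) (x0 y0 dx dy : Fin n → ℝ)
    (t : ℝ)
    (h1 : ((x0 + dx, y0 + dy, t + 2 * om dx dy x0 y0) : Hpt n) ∈ A)
    (h2 : ((x0 + -dx, y0 + -dy, t + 2 * om (-dx) (-dy) x0 y0) : Hpt n) ∈ A) :
    ((x0, y0, t) : Hpt n) ∈ A := by
  refine seg_mem hA x0 y0 dx dy t h1 ?_
  rw [om_neg] at h2
  rw [sub_eq_add_neg, sub_eq_add_neg, sub_eq_add_neg, ← mul_neg]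
  exact h2

/-- the constant -/
def kap : ℝ := 2 * (π / 3 - √3 / 2)

lemma kap_pos : 0 < kap := by
  have h3 : √3 < 1.733 := by
    rw [Real.sqrt_lt' (by norm_num)]; norm_num
  have := Real.pi_gt_d4
  unfold kap
  linarith

lemma kap_lt : kap < 2 / 5 := by
  have h3 : 1.732 < √3 := by
    rw [Real.lt_sqrt (by norm_num)]; norm_num
  have := Real.pi_lt_d4
  unfold kap
  linarith

lemma disp_mem {n : ℕ} {A : Set (Hpt n)} (hA : GeodConvexSet A) (x0 y0 dx dy : Fin n → ℝ)
    (t1 r : ℝ) (hr : 0 < r) (hd : ∑ j, (dx j ^ 2 + dy j ^ 2) = r ^ 2)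
    (h1 : ((x0, y0, t1) : Hpt n) ∈ A) (h2 : ((x0, y0, t1 + 4 * π * r ^ 2) : Hpt n) ∈ A) :
    ((x0 + dx, y0 + dy, t1 + kap * r ^ 2 + 2 * om dx dy x0 y0) : Hpt n) ∈ A ∧
    ((x0 + dx, y0 + dy, t1 + 4 * π * r ^ 2 - kap * r ^ 2 + 2 * om dx dy x0 y0) : Hpt n) ∈ A := by
  have h3 : √3 ^ 2 = 3 := Real.sq_sqrt (by norm_num)
  have hpi := Real.pi_pos
  constructor
  · have hab : ∑ j, ((dx j / 2 + dy j * √3 / 2) ^ 2 + (dy j / 2 - dx j * √3 / 2) ^ 2) = r ^ 2 := by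
      rw [← hd]
      refine Finset.sum_congr rfl fun j _ => ?_
      linear_combination ((dx j) ^ 2 + (dy j) ^ 2) / 4 * h3
    have := circ_mem hA x0 y0 _ _ t1 r hr hab h1 h2 (π / 3) ⟨by positivity, by linarith⟩
    rw [Real.cos_pi_div_three, Real.sin_pi_div_three] at this
    have e1 : ∀ j, (dx j / 2 + dy j * √3 / 2) * (1 - 1 / 2) -
        (dy j / 2 - dx j * √3 / 2) * (√3 / 2) = dx j := fun j => by
      linear_combination (dx j) / 4 * h3
    have e2 : ∀ j, (dy j / 2 - dx j * √3 / 2) * (1 - 1 / 2) +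
        (dx j / 2 + dy j * √3 / 2) * (√3 / 2) = dy j := fun j => by
      linear_combination (dy j) / 4 * h3
    simp only [e1, e2] at this
    convert! this using 3
    unfold kap om
    ring
  · have hab : ∑ j, ((dx j / 2 - dy j * √3 / 2) ^ 2 + (dy j / 2 + dx j * √3 / 2) ^ 2) = r ^ 2 := by
      rw [← hd]
      refine Finset.sum_congr rfl fun j _ => ?_
      linear_combination ((dx j) ^ 2 + (dy j) ^ 2) / 4 * h3
    have := circ_mem hA x0 y0 _ _ t1 r hr hab h1 h2 (2 * π - π / 3) ⟨by linarith, by linarith⟩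
    rw [Real.cos_two_pi_sub, Real.sin_two_pi_sub, Real.cos_pi_div_three,
      Real.sin_pi_div_three] at this
    have e1 : ∀ j, (dx j / 2 - dy j * √3 / 2) * (1 - 1 / 2) -
        (dy j / 2 + dx j * √3 / 2) * -(√3 / 2) = dx j := fun j => by
      linear_combination (dx j) / 4 * h3
    have e2 : ∀ j, (dy j / 2 + dx j * √3 / 2) * (1 - 1 / 2) +
        (dx j / 2 - dy j * √3 / 2) * -(√3 / 2) = dy j := fun j => by
      linear_combination (dy j) / 4 * h3
    simp only [e1, e2] at this
    convert! this using 3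
    unfold kap om
    ring

lemma two_step {n : ℕ} {A : Set (Hpt n)} (hA : GeodConvexSet A) (x0 y0 dx dy ex ey : Fin n → ℝ)
    (t1 r r1 : ℝ) (hr : 0 < r) (hr1 : 0 < r1) (hrr : 4 * π * r1 ^ 2 = 4 * π * r ^ 2 - 2 * kap * r ^ 2)
    (hd : ∑ j, (dx j ^ 2 + dy j ^ 2) = r ^ 2) (he : ∑ j, (ex j ^ 2 + ey j ^ 2) = r1 ^ 2)
    (h1 : ((x0, y0, t1) : Hpt n) ∈ A) (h2 : ((x0, y0, t1 + 4 * π * r ^ 2) : Hpt n) ∈ A) :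
    ((x0 + (dx + ex), y0 + (dy + ey), t1 + kap * (r ^ 2 + r1 ^ 2) + 2 * om ex ey dx dy
      + 2 * om (dx + ex) (dy + ey) x0 y0) : Hpt n) ∈ A ∧
    ((x0 + (dx + ex), y0 + (dy + ey), t1 + 4 * π * r ^ 2 - kap * (r ^ 2 + r1 ^ 2)
      + 2 * om ex ey dx dy + 2 * om (dx + ex) (dy + ey) x0 y0) : Hpt n) ∈ A := by
  obtain ⟨g1, g2⟩ := disp_mem hA x0 y0 dx dy t1 r hr hd h1 h2
  have g3 := disp_mem hA _ _ ex ey _ r1 hr1 he g1 (by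
    convert! g2 using 3
    linear_combination hrr)
  rw [om_add', add_assoc x0, add_assoc y0] at g3
  rw [om_add]
  obtain ⟨g4, g5⟩ := g3
  constructor
  · convert! g4 using 3
    ring
  · convert! g5 using 3
    linear_combination -hrr

lemma grow {n : ℕ} {A : Set (Hpt n)} (hA : GeodConvexSet A) (x0 y0 dx dy ex ey : Fin n → ℝ)
    (t1 r r1 : ℝ) (hr : 0 < r) (hr1 : 0 < r1) (hrr : 4 * π * r1 ^ 2 = 4 * π * r ^ 2 - 2 * kap * r ^ 2)
    (hd : ∑ j, (dx j ^ 2 + dy j ^ 2) = r ^ 2) (he : ∑ j, (ex j ^ 2 + ey j ^ 2) = r1 ^ 2)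
    (h1 : ((x0, y0, t1) : Hpt n) ∈ A) (h2 : ((x0, y0, t1 + 4 * π * r ^ 2) : Hpt n) ∈ A) :
    ((x0, y0, t1 + kap * (r ^ 2 + r1 ^ 2) + 2 * om ex ey dx dy) : Hpt n) ∈ A ∧
    ((x0, y0, t1 + 4 * π * r ^ 2 - kap * (r ^ 2 + r1 ^ 2) + 2 * om ex ey dx dy) : Hpt n) ∈ A := by
  have g := two_step hA x0 y0 dx dy ex ey t1 r r1 hr hr1 hrr hd he h1 h2
  have g' := two_step hA x0 y0 (-dx) (-dy) (-ex) (-ey) t1 r r1 hr hr1 hrr (by simpa using hd)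
    (by simpa using he) h1 h2
  have e : om (-ex) (-ey) (-dx) (-dy) = om ex ey dx dy := by rw [om_neg, om_neg', neg_neg]
  rw [e, ← neg_add, ← neg_add] at g'
  exact ⟨seg_mem' hA _ _ _ _ _ g.1 g'.1, seg_mem' hA _ _ _ _ _ g.2 g'.2⟩

lemma fill {n : ℕ} (hn : 1 ≤ n) {A : Set (Hpt n)} (hA : GeodConvexSet A) (x0 y0 : Fin n → ℝ)
    (t1 r : ℝ) (hr : 0 < r)
    (h1 : ((x0, y0, t1) : Hpt n) ∈ A) (h2 : ((x0, y0, t1 + 4 * π * r ^ 2) : Hpt n) ∈ A)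
    (t : ℝ) (ht : t ∈ Icc t1 (t1 + 4 * π * r ^ 2)) : ((x0, y0, t) : Hpt n) ∈ A := by
  have hcont : ContinuousOn (fun φ => t1 + 2 * r ^ 2 * (φ - sin φ)) (Icc 0 (2 * π)) := by
    fun_prop
  obtain ⟨φ, hφ, rfl⟩ := intermediate_value_Icc (by positivity) hcont (show t ∈ Icc _ _ by
    constructor
    · simpa using ht.1
    · simp only [Real.sin_two_pi]
      linarith [ht.2])
  set a : Fin n → ℝ := Pi.single ⟨0, hn⟩ r with ha
  have hab : ∑ j, (a j ^ 2 + (0 : Fin n → ℝ) j ^ 2) = r ^ 2 := by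
    rw [Finset.sum_eq_single ⟨0, hn⟩]
    · simp [ha]
    · intro j _ hj
      simp [ha, hj]
    · simp
  have g1 := circ_mem hA x0 y0 a 0 t1 r hr hab h1 h2 φ hφ
  have g2 := circ_mem hA x0 y0 (-a) 0 t1 r hr (by simpa using hab) h1 h2 φ hφ
  refine seg_mem' hA x0 y0 (fun j => a j * (1 - cos φ) - (0 : Fin n → ℝ) j * sin φ)
    (fun j => (0 : Fin n → ℝ) j * (1 - cos φ) + a j * sin φ) _ g1 ?_
  convert! g2 using 3
  · simp
  · ext j; simp
  · congr 2
    refine Finset.sum_congr rfl fun j _ => ?_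
    simp

/-- Any geodetically convex set containing two distinct points on a line
parallel to the `t`-axis is the whole space `ℍⁿ`. -/
theorem stmt_1 (n : ℕ) (hn : 1 ≤ n) (x y : Fin n → ℝ) (t₁ t₂ : ℝ) (ht : t₁ ≠ t₂)
    (A : Set (Hpt n)) (hA : GeodConvexSet A)
    (hp : ((x, y, t₁) : Hpt n) ∈ A) (hq : ((x, y, t₂) : Hpt n) ∈ A) :
    A = Set.univ := by
  wlog hlt : t₁ < t₂ generalizing t₁ t₂
  · exact this t₂ t₁ ht.symm hq hp (lt_of_le_of_ne (not_lt.1 hlt) ht.symm)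
  have hpi := Real.pi_pos
  set V : Set ℝ := {t | ((x, y, t) : Hpt n) ∈ A} with hV
  have hrad : ∀ s t : ℝ, s < t → ∃ r, 0 < r ∧ t = s + 4 * π * r ^ 2 := by
    intro s t hst
    refine ⟨√((t - s) / (4 * π)), Real.sqrt_pos.2 (div_pos (by linarith) (by positivity)), ?_⟩
    rw [Real.sq_sqrt (div_nonneg (by linarith) (by positivity))]
    field_simp
    ring
  have hfill : ∀ s ∈ V, ∀ t ∈ V, ∀ u, s ≤ u → u ≤ t → u ∈ V := by
    intro s hs t ht u hsu hut
    rcases hsu.eq_or_lt with rfl | hsu'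
    · exact hs
    obtain ⟨r, hr, rfl⟩ := hrad s t (by linarith)
    exact fill hn hA x y s r hr hs ht u ⟨hsu, hut⟩
  have hgrow : ∀ s ∈ V, ∀ t ∈ V, s < t →
      (∃ u ∈ V, t + (t - s) / 64 ≤ u) ∧ (∃ u ∈ V, u ≤ s - (t - s) / 64) := by
    intro s hs t ht hst
    obtain ⟨r, hr, rfl⟩ := hrad s t hst
    have hk1 := kap_pos
    have hk2 := kap_lt
    have hp3 := Real.pi_gt_three
    have hp4 := Real.pi_lt_four
    obtain ⟨r1, hr1⟩ : ∃ r1, r1 = r * √(1 - kap / (2 * π)) := ⟨_, rfl⟩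
    have hq1 : kap / (2 * π) ≤ 3 / 4 := by
      rw [div_le_iff₀ (by positivity)]; linarith
    have hq0 : 0 ≤ kap / (2 * π) := by positivity
    have hρ : (1 : ℝ) / 2 ≤ √(1 - kap / (2 * π)) := by
      apply Real.le_sqrt_of_sq_le
      linarith
    have hρ1 : √(1 - kap / (2 * π)) ≤ 1 := by
      rw [Real.sqrt_le_left (by norm_num)]
      linarith
    have hr1p : 0 < r1 := by rw [hr1]; positivity
    have hr1a : r / 2 ≤ r1 := by rw [hr1]; nlinarith
    have hr1b : r1 ≤ r := by rw [hr1]; nlinarith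
    have hrr : 4 * π * r1 ^ 2 = 4 * π * r ^ 2 - 2 * kap * r ^ 2 := by
      rw [hr1, mul_pow, Real.sq_sqrt (by linarith)]
      field_simp
      ring
    have hbig : 4 * π * r ^ 2 / 64 ≤ 2 * (r1 * r) - kap * (r ^ 2 + r1 ^ 2) := by
      have a1 : kap * (r ^ 2 + r1 ^ 2) ≤ 2 / 5 * (r ^ 2 + r1 ^ 2) := by gcongr
      have a2 : π * r ^ 2 ≤ 4 * r ^ 2 := by gcongr
      nlinarith [mul_nonneg (sub_nonneg.2 hr1a) (sub_nonneg.2 hr1b)]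
    have hsing : ∀ c : ℝ, ∑ j, ((Pi.single ⟨0, hn⟩ c : Fin n → ℝ) j ^ 2) = c ^ 2 := by
      intro c
      rw [Finset.sum_eq_single ⟨0, hn⟩]
      · simp
      · intro j _ hj
        simp [hj]
      · simp
    have hd : ∑ j, ((Pi.single ⟨0, hn⟩ r : Fin n → ℝ) j ^ 2 + (0 : Fin n → ℝ) j ^ 2) = r ^ 2 := by
      simpa using hsing r
    have hom : ∀ c : ℝ, om (0 : Fin n → ℝ) (Pi.single ⟨0, hn⟩ c) (Pi.single ⟨0, hn⟩ r) 0
        = - (c * r) := by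
      intro c
      rw [om, Finset.sum_eq_single ⟨0, hn⟩]
      · simp
      · intro j _ hj
        simp [hj]
      · simp
    have gu := (grow hA x y _ 0 0 (Pi.single ⟨0, hn⟩ (-r1)) s r r1 hr hr1p hrr hd
      (by simpa using hsing (-r1)) hs ht).2
    have gl := (grow hA x y _ 0 0 (Pi.single ⟨0, hn⟩ r1) s r r1 hr hr1p hrr hd
      (by simpa using hsing r1) hs ht).1
    rw [hom] at gu gl
    exact ⟨⟨_, gu, by linarith⟩, ⟨_, gl, by linarith⟩⟩
  have hup : ∀ M, ∃ u ∈ V, M ≤ u := by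
    by_contra hcon
    push Not at hcon
    obtain ⟨M, hM⟩ := hcon
    have hbd : BddAbove V := ⟨M, fun u hu => (hM u hu).le⟩
    obtain ⟨t, ht, htl⟩ := exists_lt_of_lt_csSup ⟨t₂, hq⟩
      (show sSup V - (t₂ - t₁) / 64 < sSup V by linarith)
    have hm : max t t₂ ∈ V := by rcases max_choice t t₂ with h | h <;> rw [h] <;> assumption
    have hle1 := le_max_left t t₂
    have hle2 := le_max_right t t₂
    obtain ⟨u, hu, hule⟩ := (hgrow t₁ hp _ hm (by linarith)).1
    have := le_csSup hbd hu
    linarith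
  have hdown : ∀ M, ∃ u ∈ V, u ≤ M := by
    by_contra hcon
    push Not at hcon
    obtain ⟨M, hM⟩ := hcon
    have hbd : BddBelow V := ⟨M, fun u hu => (hM u hu).le⟩
    obtain ⟨t, ht, htl⟩ := exists_lt_of_csInf_lt ⟨t₁, hp⟩
      (show sInf V < sInf V + (t₂ - t₁) / 64 by linarith)
    have hm : min t t₁ ∈ V := by rcases min_choice t t₁ with h | h <;> rw [h] <;> assumption
    have hle1 := min_le_left t t₁
    have hle2 := min_le_right t t₁
    obtain ⟨u, hu, hule⟩ := (hgrow _ hm t₂ hq (by linarith)).2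
    have := csInf_le hbd hu
    linarith
  have hall : ∀ t, ((x, y, t) : Hpt n) ∈ A := by
    intro t
    obtain ⟨u, hu, h1⟩ := hup t
    obtain ⟨w, hw, h2⟩ := hdown t
    exact hfill w hw u hu t h2 h1
  refine eq_univ_of_forall ?_
  rintro ⟨x', y', t⟩
  have hq : 0 ≤ ∑ j, ((x' - x) j ^ 2 + (y' - y) j ^ 2) :=
    Finset.sum_nonneg fun j _ => by positivity
  rcases hq.eq_or_lt with h0 | h0
  · have hz := (Finset.sum_eq_zero_iff_of_nonneg (fun j _ => by positivity)).1 h0.symm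
    have hx : x' = x := by
      ext j
      have := hz j (Finset.mem_univ j)
      have h1 : (x' - x) j ^ 2 = 0 := by nlinarith [sq_nonneg ((x' - x) j), sq_nonneg ((y' - y) j)]
      exact sub_eq_zero.1 (pow_eq_zero_iff (two_ne_zero) |>.1 h1)
    have hy : y' = y := by
      ext j
      have := hz j (Finset.mem_univ j)
      have h1 : (y' - y) j ^ 2 = 0 := by nlinarith [sq_nonneg ((x' - x) j), sq_nonneg ((y' - y) j)]
      exact sub_eq_zero.1 (pow_eq_zero_iff (two_ne_zero) |>.1 h1)
    rw [hx, hy]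
    exact hall t
  · obtain ⟨r, hr⟩ : ∃ r, r = √(∑ j, ((x' - x) j ^ 2 + (y' - y) j ^ 2)) := ⟨_, rfl⟩
    have hr0 : 0 < r := by rw [hr]; exact Real.sqrt_pos.2 h0
    have hr2 : ∑ j, ((x' - x) j ^ 2 + (y' - y) j ^ 2) = r ^ 2 := by
      rw [hr, Real.sq_sqrt hq]
    have := (disp_mem hA x y (x' - x) (y' - y)
      (t - kap * r ^ 2 - 2 * om (x' - x) (y' - y) x y) r hr0 hr2 (hall _) (hall _)).1
    convert! this using 3
    · simp
    · simp
    · ring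
end
end

section
/- Let n ≥ 1, T₀ > 0, and A = {(0,0,0), (0,0,T₀)} ⊆ ℍ^n. For every m ≥ 1, the set G^m(A) is invariant under the reflection about the hyperplane t = T₀/2, i.e., under the map (x,y,t) ↦ (x,y,T₀−t). -/
open MeasureTheory Set Real
open scoped ENNReal NNReal

noncomputable section

def hreflLin {n : ℕ} (c s : Fin n → ℝ) : Hpt n →ₗ[ℝ] Hpt n where
  toFun p := (fun j => c j * p.1 j + s j * p.2.1 j, fun j => s j * p.1 j - c j * p.2.1 j, -p.2.2)
  map_add' p q := by
    refine Prod.ext ?_ (Prod.ext ?_ ?_)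
    · funext j; simp; ring
    · funext j; simp; ring
    · simp; ring
  map_smul' r p := by
    refine Prod.ext ?_ (Prod.ext ?_ ?_)
    · funext j; simp; ring
    · funext j; simp; ring
    · simp

def hrefl {n : ℕ} (c s : Fin n → ℝ) (T : ℝ) (p : Hpt n) : Hpt n :=
  (LinearMap.toContinuousLinearMap (hreflLin c s)) p + ((0 : Fin n → ℝ), (0 : Fin n → ℝ), T)

theorem hrefl_apply {n : ℕ} (c s : Fin n → ℝ) (T : ℝ) (p : Hpt n) :
    hrefl c s T p = (fun j => c j * p.1 j + s j * p.2.1 j,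
      fun j => s j * p.1 j - c j * p.2.1 j, T - p.2.2) := by
  refine Prod.ext ?_ (Prod.ext ?_ ?_)
  · funext j; simp [hrefl, hreflLin]
  · funext j; simp [hrefl, hreflLin]
  · simp [hrefl, hreflLin]; ring

theorem hrefl_invol {n : ℕ} {c s : Fin n → ℝ} (h : ∀ j, c j ^ 2 + s j ^ 2 = 1) (T : ℝ)
    (p : Hpt n) : hrefl c s T (hrefl c s T p) = p := by
  rw [hrefl_apply, hrefl_apply]
  refine Prod.ext ?_ (Prod.ext ?_ ?_)
  · funext j
    change c j * (c j * p.1 j + s j * p.2.1 j) + s j * (s j * p.1 j - c j * p.2.1 j) = p.1 j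
    linear_combination (p.1 j) * h j
  · funext j
    change s j * (c j * p.1 j + s j * p.2.1 j) - c j * (s j * p.1 j - c j * p.2.1 j) = p.2.1 j
    linear_combination (p.2.1 j) * h j
  · change T - (T - p.2.2) = p.2.2
    ring

theorem hrefl_horizontal {n : ℕ} {c s : Fin n → ℝ} (h : ∀ j, c j ^ 2 + s j ^ 2 = 1) (T : ℝ)
    {γ : ℝ → Hpt n} {a b : ℝ} (hγ : IsHorizontal γ a b) :
    IsHorizontal (fun u => hrefl c s T (γ u)) a b := by
  obtain ⟨hab, ⟨K, hK⟩, γ', hd, hh⟩ := hγ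
  set L := LinearMap.toContinuousLinearMap (hreflLin c s) with hL
  refine ⟨hab, ⟨‖L‖₊ * K, ?_⟩, fun u => L (γ' u), ?_, ?_⟩
  · intro u hu v hv
    have h1 := (L.lipschitz.comp_lipschitzOnWith hK) hu hv
    simpa [hrefl, edist_add_right, hL] using h1
  · filter_upwards [hd] with u hu
    exact (L.hasFDerivAt.comp_hasDerivAt u hu).add_const _
  · filter_upwards [hh] with u hu
    rw [hrefl_apply]
    change -(γ' u).2.2 = 2 * ∑ j, ((c j * (γ' u).1 j + s j * (γ' u).2.1 j) *
      (s j * (γ u).1 j - c j * (γ u).2.1 j) - (s j * (γ' u).1 j - c j * (γ' u).2.1 j) *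
      (c j * (γ u).1 j + s j * (γ u).2.1 j))
    rw [hu, ← mul_neg, ← Finset.sum_neg_distrib]
    congr 1
    refine Finset.sum_congr rfl fun j _ => ?_
    linear_combination (-((γ' u).2.1 j * (γ u).1 j) + (γ' u).1 j * (γ u).2.1 j) * h j

theorem hrefl_edist {n : ℕ} {c s : Fin n → ℝ} (h : ∀ j, c j ^ 2 + s j ^ 2 = 1) (T : ℝ)
    (p q : Hpt n) :
    edist (hproj (hrefl c s T p)) (hproj (hrefl c s T q)) = edist (hproj p) (hproj q) := by
  rw [edist_dist, edist_dist, EuclideanSpace.dist_eq, EuclideanSpace.dist_eq]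
  congr 2
  simp only [Fintype.sum_sum_type, hproj, hrefl_apply, Real.dist_eq, sq_abs]
  rw [← Finset.sum_add_distrib, ← Finset.sum_add_distrib]
  refine Finset.sum_congr rfl fun j _ => ?_
  simp
  linear_combination ((p.1 j - q.1 j) ^ 2 + (p.2.1 j - q.2.1 j) ^ 2) * h j

theorem hrefl_length {n : ℕ} {c s : Fin n → ℝ} (h : ∀ j, c j ^ 2 + s j ^ 2 = 1) (T : ℝ)
    (γ : ℝ → Hpt n) (a b : ℝ) :
    hLength (fun u => hrefl c s T (γ u)) a b = hLength γ a b := by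
  simp only [hLength, eVariationOn, hrefl_edist h]

theorem hrefl_cc_le {n : ℕ} {c s : Fin n → ℝ} (h : ∀ j, c j ^ 2 + s j ^ 2 = 1) (T : ℝ)
    (p q : Hpt n) : ccDist (hrefl c s T p) (hrefl c s T q) ≤ ccDist p q := by
  conv_rhs => rw [ccDist]
  refine le_iInf fun γ => le_iInf fun a => le_iInf fun b => le_iInf fun hγ =>
    le_iInf fun ha => le_iInf fun hb => ?_
  rw [← hrefl_length h T γ a b, ccDist]
  exact iInf_le_of_le _ <| iInf_le_of_le a <| iInf_le_of_le b <|
    iInf_le_of_le (hrefl_horizontal h T hγ) <| iInf_le_of_le (by rw [ha]) <|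
    iInf_le_of_le (by rw [hb]) le_rfl

theorem hrefl_cc {n : ℕ} {c s : Fin n → ℝ} (h : ∀ j, c j ^ 2 + s j ^ 2 = 1) (T : ℝ)
    (p q : Hpt n) : ccDist (hrefl c s T p) (hrefl c s T q) = ccDist p q := by
  refine le_antisymm (hrefl_cc_le h T p q) ?_
  have := hrefl_cc_le h T (hrefl c s T p) (hrefl c s T q)
  rwa [hrefl_invol h, hrefl_invol h] at this

theorem hrefl_Gm {n : ℕ} {c s : Fin n → ℝ} (h : ∀ j, c j ^ 2 + s j ^ 2 = 1) (T : ℝ) (m : ℕ) :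
    ∀ p ∈ Gm ({((0 : Fin n → ℝ), (0 : Fin n → ℝ), (0 : ℝ)),
          ((0 : Fin n → ℝ), (0 : Fin n → ℝ), T)} : Set (Hpt n)) m,
      hrefl c s T p ∈ Gm ({((0 : Fin n → ℝ), (0 : Fin n → ℝ), (0 : ℝ)),
          ((0 : Fin n → ℝ), (0 : Fin n → ℝ), T)} : Set (Hpt n)) m := by
  induction m with
  | zero =>
    intro p hp
    rcases hp with rfl | hp
    · right
      rw [mem_singleton_iff, hrefl_apply]
      refine Prod.ext ?_ (Prod.ext ?_ ?_)
      · funext j; simp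
      · funext j; simp
      · simp
    · rw [mem_singleton_iff] at hp
      subst hp
      left
      rw [hrefl_apply]
      refine Prod.ext ?_ (Prod.ext ?_ ?_)
      · funext j; simp
      · funext j; simp
      · simp
  | succ m ih =>
    rintro z ⟨p, hp, q, hq, γ, a, b, ⟨hγ, hl⟩, ha, hb, u, hu, rfl⟩
    refine ⟨_, ih p hp, _, ih q hq, fun u => hrefl c s T (γ u), a, b,
      ⟨hrefl_horizontal h T hγ, ?_⟩, by simp only [ha], by simp only [hb], u, hu, rfl⟩
    rw [hrefl_length h, hl, hrefl_cc h]

theorem exists_refl_coord (x y : ℝ) :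
    ∃ c s : ℝ, c ^ 2 + s ^ 2 = 1 ∧ c * x + s * y = x ∧ s * x - c * y = y := by
  by_cases h0 : x ^ 2 + y ^ 2 = 0
  · have hx : x = 0 := by nlinarith [sq_nonneg x, sq_nonneg y]
    have hy : y = 0 := by nlinarith [sq_nonneg x, sq_nonneg y]
    exact ⟨1, 0, by simp, by simp [hx], by simp [hy]⟩
  · refine ⟨(x ^ 2 - y ^ 2) / (x ^ 2 + y ^ 2), 2 * x * y / (x ^ 2 + y ^ 2), ?_, ?_, ?_⟩
    · field_simp; ring
    · field_simp; ring
    · field_simp; ring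

theorem refl_mem_Gm {n : ℕ} (T : ℝ) (m : ℕ) (p : Hpt n)
    (hp : p ∈ Gm ({((0 : Fin n → ℝ), (0 : Fin n → ℝ), (0 : ℝ)),
          ((0 : Fin n → ℝ), (0 : Fin n → ℝ), T)} : Set (Hpt n)) m) :
      (p.1, p.2.1, T - p.2.2) ∈ Gm ({((0 : Fin n → ℝ), (0 : Fin n → ℝ), (0 : ℝ)),
          ((0 : Fin n → ℝ), (0 : Fin n → ℝ), T)} : Set (Hpt n)) m := by
  choose c s h h1 h2 using fun j => exists_refl_coord (p.1 j) (p.2.1 j)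
  have := hrefl_Gm h T m p hp
  rw [hrefl_apply] at this
  simpa only [h1, h2] using this

/-- Each `G^m(A)` is invariant under the reflection about the hyperplane
`t = T₀/2`, i.e. under `(x,y,t) ↦ (x,y,T₀-t)`. -/
theorem stmt_8 (n : ℕ) (hn : 1 ≤ n) (T₀ : ℝ) (hT : 0 < T₀) (m : ℕ) (hm : 1 ≤ m) :
    (fun p : Hpt n => (p.1, p.2.1, T₀ - p.2.2)) ''
        Gm ({((0 : Fin n → ℝ), (0 : Fin n → ℝ), (0 : ℝ)),
          ((0 : Fin n → ℝ), (0 : Fin n → ℝ), T₀)} : Set (Hpt n)) m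
      = Gm ({((0 : Fin n → ℝ), (0 : Fin n → ℝ), (0 : ℝ)),
          ((0 : Fin n → ℝ), (0 : Fin n → ℝ), T₀)} : Set (Hpt n)) m := by
  apply Set.Subset.antisymm
  · rintro _ ⟨p, hp, rfl⟩
    exact refl_mem_Gm T₀ m p hp
  · intro p hp
    refine ⟨_, refl_mem_Gm T₀ m p hp, ?_⟩
    simp
end
end

section
/- Let n ≥ 1, T₀ > 0, and A = {(0,0,0), (0,0,T₀)} ⊆ ℍ^n. Let τ : ℍ^n → ℍ^n be the projection τ(x,y,t) = (x,0,t) (setting the y-coordinates to zero). Then for every m ≥ 1, τ(G^m(A)) ⊆ G^{m+1}(A). -/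
open MeasureTheory Set Real
open scoped ENNReal NNReal

noncomputable section

abbrev CV (n : ℕ) : Type := EuclideanSpace ℂ (Fin n)

def toC {n : ℕ} (p : Hpt n) : CV n := WithLp.toLp 2 (fun j => (⟨p.1 j, p.2.1 j⟩ : ℂ))

@[simp] lemma toC_apply {n : ℕ} (p : Hpt n) (j : Fin n) :
    toC p j = (⟨p.1 j, p.2.1 j⟩ : ℂ) := rfl

def PhiLin {n : ℕ} (L : CV n →ₗᵢ[ℂ] CV n) : Hpt n →ₗ[ℝ] Hpt n where
  toFun p := (fun j => (L (toC p) j).re, fun j => (L (toC p) j).im, p.2.2)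
  map_add' p q := by
    have h : toC (p + q) = toC p + toC q := by
      ext j; apply Complex.ext <;> simp
    rw [h, map_add]
    refine Prod.ext ?_ (Prod.ext ?_ ?_)
    · ext j; simp
    · ext j; simp
    · simp
  map_smul' c p := by
    have h : toC (c • p) = (c : ℂ) • toC p := by
      ext j; apply Complex.ext <;> simp
    rw [h, map_smul]
    refine Prod.ext ?_ (Prod.ext ?_ ?_)
    · ext j; simp
    · ext j; simp
    · simp

def Phi {n : ℕ} (L : CV n →ₗᵢ[ℂ] CV n) : Hpt n →L[ℝ] Hpt n :=
  LinearMap.toContinuousLinearMap (PhiLin L)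

lemma Phi_apply {n : ℕ} (L : CV n →ₗᵢ[ℂ] CV n) (p : Hpt n) :
    Phi L p = (fun j => (L (toC p) j).re, fun j => (L (toC p) j).im, p.2.2) := rfl

lemma toC_Phi {n : ℕ} (L : CV n →ₗᵢ[ℂ] CV n) (p : Hpt n) : toC (Phi L p) = L (toC p) := by
  ext j; apply Complex.ext <;> simp [Phi_apply]

lemma Phi_t {n : ℕ} (L : CV n →ₗᵢ[ℂ] CV n) (p : Hpt n) : (Phi L p).2.2 = p.2.2 := rfl

lemma omega_eq {n : ℕ} (p q : Hpt n) :
    ∑ j, (p.1 j * q.2.1 j - p.2.1 j * q.1 j) = (inner ℂ (toC p) (toC q)).im := by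
  rw [PiLp.inner_apply, Complex.im_sum]
  apply Finset.sum_congr rfl
  intro j _
  simp
  ring

lemma edist_hproj {n : ℕ} (p q : Hpt n) : edist (hproj p) (hproj q) = edist (toC p) (toC q) := by
  rw [edist_dist, edist_dist, EuclideanSpace.dist_eq, EuclideanSpace.dist_eq]
  congr 2
  rw [Fintype.sum_sum_type, ← Finset.sum_add_distrib]
  apply Finset.sum_congr rfl
  intro j _
  simp [hproj, Complex.dist_eq, Complex.sq_norm, Complex.normSq_apply, Real.dist_eq, sq_abs]
  ring

lemma evar_congr {α E F : Type*} [LinearOrder α] [PseudoEMetricSpace E] [PseudoEMetricSpace F]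
    (f : α → E) (g : α → F) (s : Set α) (h : ∀ x y, edist (f x) (f y) = edist (g x) (g y)) :
    eVariationOn f s = eVariationOn g s := by
  simp only [eVariationOn, h]

lemma hLength_Phi {n : ℕ} (L : CV n →ₗᵢ[ℂ] CV n) (γ : ℝ → Hpt n) (a b : ℝ) :
    hLength (fun s => Phi L (γ s)) a b = hLength γ a b := by
  apply evar_congr
  intro x y
  rw [edist_hproj, edist_hproj, toC_Phi, toC_Phi, L.edist_map]

lemma horizontal_Phi {n : ℕ} (L : CV n →ₗᵢ[ℂ] CV n) {γ : ℝ → Hpt n} {a b : ℝ}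
    (h : IsHorizontal γ a b) : IsHorizontal (fun s => Phi L (γ s)) a b := by
  obtain ⟨hab, ⟨K, hK⟩, γ', h1, h2⟩ := h
  refine ⟨hab, ⟨_, (Phi L).lipschitz.comp_lipschitzOnWith hK⟩, fun s => Phi L (γ' s), ?_, ?_⟩
  · filter_upwards [h1] with s hs
    exact (Phi L).hasFDerivAt.comp_hasDerivAt s hs
  · filter_upwards [h2] with s hs
    rw [omega_eq, toC_Phi, toC_Phi, L.inner_map_map, ← omega_eq, Phi_t, hs]

lemma ccDist_Phi_le {n : ℕ} (L : CV n →ₗᵢ[ℂ] CV n) (p q : Hpt n) :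
    ccDist (Phi L p) (Phi L q) ≤ ccDist p q := by
  unfold ccDist
  refine le_iInf fun γ => le_iInf fun a => le_iInf fun b => le_iInf fun h => le_iInf fun ha =>
    le_iInf fun hb => ?_
  rw [← hLength_Phi L]
  exact iInf_le_of_le (fun s => Phi L (γ s)) (iInf_le_of_le a (iInf_le_of_le b
    (iInf_le_of_le (horizontal_Phi L h) (iInf_le_of_le (by simp [ha]) (iInf_le_of_le (by simp [hb]) le_rfl)))))

lemma Phi_inv {n : ℕ} (L : CV n →ₗᵢ[ℂ] CV n) : ∃ L' : CV n →ₗᵢ[ℂ] CV n,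
    ∀ p, Phi L' (Phi L p) = p := by
  refine ⟨(L.toLinearIsometryEquiv rfl).symm.toLinearIsometry, fun p => ?_⟩
  rw [Phi_apply, toC_Phi]
  have : (L.toLinearIsometryEquiv rfl).symm (L (toC p)) = toC p :=
    (L.toLinearIsometryEquiv rfl).symm_apply_apply (toC p)
  simp [this, Phi_t]

lemma ccDist_Phi {n : ℕ} (L : CV n →ₗᵢ[ℂ] CV n) (p q : Hpt n) :
    ccDist (Phi L p) (Phi L q) = ccDist p q := by
  refine le_antisymm (ccDist_Phi_le L p q) ?_
  obtain ⟨L', h⟩ := Phi_inv L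
  simpa [h] using ccDist_Phi_le L' (Phi L p) (Phi L q)

lemma Gm_Phi {n : ℕ} (L : CV n →ₗᵢ[ℂ] CV n) (A : Set (Hpt n)) (hA : ∀ p ∈ A, Phi L p ∈ A) (m : ℕ) :
    ∀ p ∈ Gm A m, Phi L p ∈ Gm A m := by
  induction m with
  | zero => exact hA
  | succ m ih =>
    rintro z ⟨p, hp, q, hq, γ, a, b, ⟨hγ, hl⟩, ha, hb, s, hs, rfl⟩
    refine ⟨_, ih p hp, _, ih q hq, fun s => Phi L (γ s), a, b, ⟨horizontal_Phi L hγ, ?_⟩,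
      by simp [ha], by simp [hb], s, hs, rfl⟩
    rw [hLength_Phi, ccDist_Phi, hl]

lemma edist_le_ccDist {n : ℕ} (p q : Hpt n) : edist (toC p) (toC q) ≤ ccDist p q := by
  unfold ccDist
  refine le_iInf fun γ => le_iInf fun a => le_iInf fun b => le_iInf fun h => le_iInf fun ha =>
    le_iInf fun hb => ?_
  rw [← edist_hproj, ← ha, ← hb]
  exact eVariationOn.edist_le (fun s => hproj (γ s)) (left_mem_Icc.2 h.1) (right_mem_Icc.2 h.1)

def seg {n : ℕ} (p : Hpt n) (s : ℝ) : Hpt n := (s • p.1, s • p.2.1, p.2.2)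

lemma toC_seg {n : ℕ} (p : Hpt n) (s : ℝ) : toC (seg p s) = s • toC p := by
  ext j; apply Complex.ext <;> simp [seg]

lemma seg_horizontal {n : ℕ} (p : Hpt n) : IsHorizontal (seg p) (-1) 1 := by
  have hd : ∀ s, HasDerivAt (seg p) (p.1, p.2.1, (0:ℝ)) s := by
    intro s
    have h1 : HasDerivAt (fun s : ℝ => s • p.1) p.1 s := by
      simpa using (hasDerivAt_id s).smul_const p.1
    have h2 : HasDerivAt (fun s : ℝ => s • p.2.1) p.2.1 s := by
      simpa using (hasDerivAt_id s).smul_const p.2.1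
    exact h1.prodMk (h2.prodMk (hasDerivAt_const s p.2.2))
  refine ⟨by norm_num, ⟨‖((p.1, p.2.1, (0:ℝ)) : Hpt n)‖₊, ?_⟩, fun _ => (p.1, p.2.1, 0), ?_, ?_⟩
  · apply LipschitzWith.lipschitzOnWith
    apply lipschitzWith_of_nnnorm_deriv_le (fun s => (hd s).differentiableAt)
    intro s
    rw [(hd s).deriv]
  · exact Filter.Eventually.of_forall hd
  · refine Filter.Eventually.of_forall fun s => ?_
    simp only [seg, Pi.smul_apply, smul_eq_mul]
    rw [Finset.sum_eq_zero]
    · simp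
    · intro j _; ring

lemma seg_geodesic {n : ℕ} (p : Hpt n) : IsGeodesicOn (seg p) (-1) 1 := by
  refine ⟨seg_horizontal p, le_antisymm ?_ ?_⟩
  · refine le_trans ?_ (edist_le_ccDist _ _)
    have e : hLength (seg p) (-1) 1 = eVariationOn (fun s : ℝ => s • toC p) (Icc (-1) 1) := by
      apply evar_congr
      intro x y
      rw [edist_hproj, toC_seg, toC_seg]
    rw [e, toC_seg, toC_seg]
    have hl : LipschitzOnWith ‖toC p‖₊ (fun s : ℝ => s • toC p) univ := by
      apply LipschitzWith.lipschitzOnWith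
      apply LipschitzWith.of_dist_le_mul
      intro x y
      rw [dist_eq_norm, ← sub_smul, norm_smul, mul_comm, Real.dist_eq]
      simp
    have h1 := hl.comp_eVariationOn_le (g := fun s : ℝ => s) (s := Icc (-1) 1) (fun _ _ => mem_univ _)
    have h2 := MonotoneOn.eVariationOn_le (f := fun s : ℝ => s) (s := Icc (-1) 1) (a := -1) (b := 1)
      (fun _ _ _ _ h => h) (by simp) (by simp)
    have h3 : Icc (-1:ℝ) 1 ∩ Icc (-1) 1 = Icc (-1) 1 := inter_self _
    rw [h3] at h2
    refine h1.trans ((mul_le_mul_right h2 _).trans ?_)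
    rw [edist_dist, dist_eq_norm, ← sub_smul, norm_smul,
      ENNReal.ofReal_mul (norm_nonneg _), mul_comm]
    norm_num [ofReal_norm]
    exact le_rfl
  · exact iInf_le_of_le (seg p) (iInf_le_of_le (-1) (iInf_le_of_le 1
      (iInf_le_of_le (seg_horizontal p) (iInf_le_of_le rfl (iInf_le_of_le rfl le_rfl)))))

lemma exists_L {n : ℕ} (u v : CV n) (hu : ‖u‖ = 1) (hv : ‖v‖ = 1) :
    ∃ L : CV n →ₗᵢ[ℂ] CV n, L u = v := by
  let eu := LinearIsometryEquiv.toSpanUnitSingleton (𝕜 := ℂ) u hu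
  let ev := LinearIsometryEquiv.toSpanUnitSingleton (𝕜 := ℂ) v hv
  let L0 : (Submodule.span ℂ {u}) →ₗᵢ[ℂ] CV n :=
    (Submodule.span ℂ {v}).subtypeₗᵢ.comp (ev.toLinearIsometry.comp eu.symm.toLinearIsometry)
  refine ⟨L0.extend, ?_⟩
  have h1 : ((eu 1 : Submodule.span ℂ {u}) : CV n) = u := by simp [eu]
  have h := L0.extend_apply (eu 1)
  rw [h1] at h
  rw [h]
  simp [L0, ev]

lemma exists_L' {n : ℕ} (z x : CV n) (h : ‖x‖ ≤ ‖z‖) :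
    ∃ (L : CV n →ₗᵢ[ℂ] CV n) (s : ℝ), s ∈ Icc (-1 : ℝ) 1 ∧ x = s • L z := by
  by_cases hx : x = 0
  · exact ⟨LinearIsometry.id, 0, by simp, by simp [hx]⟩
  have hx' : 0 < ‖x‖ := norm_pos_iff.2 hx
  have hz' : 0 < ‖z‖ := hx'.trans_le h
  obtain ⟨L, hL⟩ := exists_L (((‖z‖⁻¹ : ℝ) : ℂ) • z) (((‖x‖⁻¹ : ℝ) : ℂ) • x)
    (by rw [norm_smul]; simp; field_simp) (by rw [norm_smul]; simp; field_simp)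
  refine ⟨L, ‖x‖ / ‖z‖, ⟨?_, ?_⟩, ?_⟩
  · have : 0 ≤ ‖x‖ / ‖z‖ := by positivity
    linarith
  · exact (div_le_one hz').2 h
  · rw [map_smul, Complex.coe_smul, Complex.coe_smul] at hL
    rw [div_eq_mul_inv, mul_smul, hL, smul_smul, mul_inv_cancel₀ hx'.ne', one_smul]

/-- For the projection `τ(x,y,t) = (x,0,t)`, one has
`τ(G^m(A)) ⊆ G^{m+1}(A)` for all `m ≥ 1`. -/
theorem stmt_9 (n : ℕ) (hn : 1 ≤ n) (T₀ : ℝ) (hT : 0 < T₀) (m : ℕ) (hm : 1 ≤ m) :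
    (fun p : Hpt n => (p.1, (0 : Fin n → ℝ), p.2.2)) ''
        Gm ({((0 : Fin n → ℝ), (0 : Fin n → ℝ), (0 : ℝ)),
          ((0 : Fin n → ℝ), (0 : Fin n → ℝ), T₀)} : Set (Hpt n)) m
      ⊆ Gm ({((0 : Fin n → ℝ), (0 : Fin n → ℝ), (0 : ℝ)),
          ((0 : Fin n → ℝ), (0 : Fin n → ℝ), T₀)} : Set (Hpt n)) (m + 1) := by
  rintro _ ⟨p, hp, rfl⟩
  set A : Set (Hpt n) := {((0 : Fin n → ℝ), (0 : Fin n → ℝ), (0 : ℝ)),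
          ((0 : Fin n → ℝ), (0 : Fin n → ℝ), T₀)} with hAdef
  have h0 : ∀ (L : CV n →ₗᵢ[ℂ] CV n) (t : ℝ), Phi L ((0, 0, t) : Hpt n) = (0, 0, t) := by
    intro L t
    have : toC ((0, 0, t) : Hpt n) = 0 := by
      ext j; apply Complex.ext <;> simp
    rw [Phi_apply, this, map_zero]
    refine Prod.ext ?_ (Prod.ext ?_ rfl) <;> ext j <;> simp
  have hinv : ∀ L : CV n →ₗᵢ[ℂ] CV n, ∀ p ∈ A, Phi L p ∈ A := by
    rintro L p (rfl | rfl)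
    · rw [h0]; exact Or.inl rfl
    · rw [h0]; exact Or.inr rfl
  let x : Hpt n := (p.1, 0, p.2.2)
  have hle : ‖toC x‖ ≤ ‖toC p‖ := by
    rw [EuclideanSpace.norm_eq, EuclideanSpace.norm_eq]
    apply Real.sqrt_le_sqrt
    apply Finset.sum_le_sum
    intro j _
    rw [Complex.sq_norm, Complex.sq_norm, Complex.normSq_apply, Complex.normSq_apply]
    simp only [x, toC_apply, Pi.zero_apply]
    nlinarith [mul_self_nonneg (p.2.1 j)]
  obtain ⟨L, s, hs, hx⟩ := exists_L' _ _ hle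
  have hq := Gm_Phi L A (hinv L) m p hp
  have hq' := Gm_Phi (LinearIsometryEquiv.neg ℂ).toLinearIsometry A (hinv _) m _ hq
  refine ⟨_, hq', _, hq, seg (Phi L p), -1, 1, seg_geodesic _, ?_, ?_, s, hs, ?_⟩
  · rw [Phi_apply _ (Phi L p)]
    refine Prod.ext ?_ (Prod.ext ?_ rfl) <;> ext j <;> simp [seg]
  · simp [seg]
  · have e := toC_seg (Phi L p) s
    rw [toC_Phi, ← hx] at e
    refine Prod.ext ?_ (Prod.ext ?_ rfl) <;> ext j
    · simpa [x] using congrArg (fun v : CV n => (v j).re) e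
    · simpa [x] using congrArg (fun v : CV n => (v j).im) e
end
end

section
/- Let n ≥ 1, T₀ > 0, and A = {(0,0,0), (0,0,T₀)} ⊆ ℍ^n. Writing points of ℍ^n as (z,t) with z = x + iy ∈ ℂ^n, if (z₀,t₀) ∈ G¹(A), then every point (z,t₀) with z ∈ ℂ^n and ‖z‖ ≤ ‖z₀‖ belongs to G²(A); that is, {(z,t₀) : ‖z‖ ≤ ‖z₀‖} ⊆ G²(A) (the solid Heisenberg bubble is contained in G²(A)). -/
open MeasureTheory Set Real
open scoped ENNReal NNReal

noncomputable section

namespace HAux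

def toC {n : ℕ} (p : Hpt n) : EuclideanSpace ℂ (Fin n) :=
  WithLp.toLp 2 (fun i => (⟨p.1 i, p.2.1 i⟩ : ℂ))

def ofC {n : ℕ} (v : EuclideanSpace ℂ (Fin n)) (t : ℝ) : Hpt n :=
  (fun i => (v i).re, fun i => (v i).im, t)

lemma toC_ofC {n : ℕ} (v : EuclideanSpace ℂ (Fin n)) (t : ℝ) : toC (ofC v t) = v := by
  ext i; simp [toC, ofC]

lemma ofC_toC {n : ℕ} (p : Hpt n) : ofC (toC p) p.2.2 = p := by
  obtain ⟨x, y, t⟩ := p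
  simp [toC, ofC]

def om {n : ℕ} (p q : Hpt n) : ℝ := ∑ j, (p.1 j * q.2.1 j - p.2.1 j * q.1 j)

lemma om_eq {n : ℕ} (p q : Hpt n) : om p q = (inner ℂ (toC p) (toC q)).im := by
  simp only [om, PiLp.inner_apply, toC, Complex.im_sum]
  refine Finset.sum_congr rfl fun j _ => ?_
  simp [Complex.mul_im]
  ring

lemma normsq_eq {n : ℕ} (p : Hpt n) : ‖toC p‖ ^ 2 = ∑ j, (p.1 j ^ 2 + p.2.1 j ^ 2) := by
  rw [EuclideanSpace.norm_sq_eq]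
  refine Finset.sum_congr rfl fun j _ => ?_
  rw [← Complex.normSq_eq_norm_sq]
  simp [toC, Complex.normSq_apply]
  ring

lemma hproj_normsq {n : ℕ} (p : Hpt n) : ‖hproj p‖ ^ 2 = ∑ j, (p.1 j ^ 2 + p.2.1 j ^ 2) := by
  rw [EuclideanSpace.norm_sq_eq]
  simp [hproj, Finset.sum_add_distrib]

lemma hproj_norm {n : ℕ} (p : Hpt n) : ‖hproj p‖ = ‖toC p‖ := by
  rw [← sq_eq_sq₀ (norm_nonneg _) (norm_nonneg _), hproj_normsq, normsq_eq]

lemma hproj_sub {n : ℕ} (p q : Hpt n) : hproj (p - q) = hproj p - hproj q := by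
  ext i; rcases i with i | i <;> simp [hproj]

lemma toC_sub {n : ℕ} (p q : Hpt n) : toC (p - q) = toC p - toC q := by
  ext i; apply Complex.ext <;> simp [toC]

def PhiL {n : ℕ} (U : EuclideanSpace ℂ (Fin n) ≃ₗᵢ[ℂ] EuclideanSpace ℂ (Fin n)) :
    Hpt n →ₗ[ℝ] Hpt n where
  toFun p := ofC (U (toC p)) p.2.2
  map_add' p q := by
    have : toC (p + q) = toC p + toC q := by
      ext i; apply Complex.ext <;> simp [toC]
    rw [this, map_add]
    ext <;> simp [ofC]
  map_smul' c p := by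
    have : toC (c • p) = (c : ℂ) • toC p := by
      ext i; apply Complex.ext <;> simp [toC]
    rw [this, map_smul]
    ext <;> simp [ofC]

def Phi {n : ℕ} (U : EuclideanSpace ℂ (Fin n) ≃ₗᵢ[ℂ] EuclideanSpace ℂ (Fin n)) :
    Hpt n →L[ℝ] Hpt n := LinearMap.toContinuousLinearMap (PhiL U)

variable {n : ℕ} (U : EuclideanSpace ℂ (Fin n) ≃ₗᵢ[ℂ] EuclideanSpace ℂ (Fin n))

lemma Phi_apply (p : Hpt n) : Phi U p = ofC (U (toC p)) p.2.2 := rfl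

lemma Phi_t (p : Hpt n) : (Phi U p).2.2 = p.2.2 := rfl

lemma toC_Phi (p : Hpt n) : toC (Phi U p) = U (toC p) := by
  rw [Phi_apply, toC_ofC]

lemma Phi_symm (p : Hpt n) : Phi U.symm (Phi U p) = p := by
  rw [Phi_apply U.symm, toC_Phi, Phi_t, U.symm_apply_apply, ofC_toC]

lemma om_Phi (p q : Hpt n) : om (Phi U p) (Phi U q) = om p q := by
  rw [om_eq, om_eq, toC_Phi, toC_Phi, U.inner_map_map]

lemma edist_Phi (p q : Hpt n) :
    edist (hproj (Phi U p)) (hproj (Phi U q)) = edist (hproj p) (hproj q) := by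
  rw [edist_dist, edist_dist, dist_eq_norm, dist_eq_norm, ← hproj_sub, ← hproj_sub, ← map_sub,
    hproj_norm, hproj_norm, toC_Phi, U.norm_map]

lemma hLength_Phi (γ : ℝ → Hpt n) (a b : ℝ) :
    hLength (fun s => Phi U (γ s)) a b = hLength γ a b := by
  simp only [hLength, eVariationOn, edist_Phi]

lemma horiz_Phi {γ : ℝ → Hpt n} {a b : ℝ} (h : IsHorizontal γ a b) :
    IsHorizontal (fun s => Phi U (γ s)) a b := by
  obtain ⟨hab, ⟨K, hK⟩, γ', h1, h2⟩ := h
  refine ⟨hab, ⟨_, (Phi U).lipschitz.comp_lipschitzOnWith hK⟩, fun s => Phi U (γ' s), ?_, ?_⟩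
  · filter_upwards [h1] with s hs
    exact (Phi U).hasFDerivAt.comp_hasDerivAt s hs
  · filter_upwards [h2] with s hs
    have := om_Phi U (γ' s) (γ s)
    simp only [om] at this
    rw [this]
    exact hs

lemma ccDist_Phi_le (p q : Hpt n) : ccDist p q ≤ ccDist (Phi U p) (Phi U q) := by
  refine le_iInf fun δ => le_iInf fun a => le_iInf fun b => le_iInf fun h => le_iInf fun ha =>
    le_iInf fun hb => ?_
  rw [← hLength_Phi U.symm]
  exact iInf_le_of_le (fun s => Phi U.symm (δ s)) (iInf_le_of_le a (iInf_le_of_le b (iInf_le_of_le (horiz_Phi U.symm h)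
    (iInf_le_of_le (by simp only [ha, Phi_symm]) (iInf_le_of_le (by simp only [hb, Phi_symm])
      le_rfl)))))

lemma ccDist_le_hLength {γ : ℝ → Hpt n} {a b : ℝ} (h : IsHorizontal γ a b) :
    ccDist (γ a) (γ b) ≤ hLength γ a b :=
  iInf_le_of_le γ (iInf_le_of_le a (iInf_le_of_le b (iInf_le_of_le h
    (iInf_le_of_le rfl (iInf_le_of_le rfl le_rfl)))))

lemma geod_Phi {γ : ℝ → Hpt n} {a b : ℝ} (h : IsGeodesicOn γ a b) :
    IsGeodesicOn (fun s => Phi U (γ s)) a b := by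
  have h1 := horiz_Phi U h.1
  have h2 := ccDist_le_hLength h1
  refine ⟨h1, le_antisymm ?_ h2⟩
  rw [hLength_Phi, h.2]
  exact ccDist_Phi_le U _ _

lemma geodJoin_Phi {S : Set (Hpt n)} (hS : ∀ p ∈ S, Phi U p ∈ S) {z : Hpt n}
    (hz : z ∈ geodJoin S) : Phi U z ∈ geodJoin S := by
  obtain ⟨p, hp, q, hq, γ, a, b, hg, rfl, rfl, s, hs, rfl⟩ := hz
  exact ⟨Phi U (γ a), hS _ hp, Phi U (γ b), hS _ hq, fun s => Phi U (γ s), a, b, geod_Phi U hg, rfl, rfl,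
    s, hs, rfl⟩

lemma edist_le_ccDist (p q : Hpt n) : edist (hproj p) (hproj q) ≤ ccDist p q := by
  refine le_iInf fun δ => le_iInf fun a => le_iInf fun b => le_iInf fun h => le_iInf fun ha =>
    le_iInf fun hb => ?_
  rw [← ha, ← hb]
  exact eVariationOn.edist_le (fun s => hproj (δ s)) (left_mem_Icc.2 h.1) (right_mem_Icc.2 h.1)

def seg (x y : Fin n → ℝ) (t : ℝ) (s : ℝ) : Hpt n := (s • x, s • y, t)

lemma hproj_seg (x y : Fin n → ℝ) (t s : ℝ) :
    hproj (seg x y t s) = s • hproj ((x, y, t) : Hpt n) := by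
  ext i; rcases i with i | i <;> simp [hproj, seg]

lemma seg_deriv (x y : Fin n → ℝ) (t s : ℝ) :
    HasDerivAt (seg x y t) ((x, y, 0) : Hpt n) s := by
  have h1 : HasDerivAt (fun s : ℝ => s • x) x s := by
    simpa using (hasDerivAt_id s).smul_const x
  have h2 : HasDerivAt (fun s : ℝ => s • y) y s := by
    simpa using (hasDerivAt_id s).smul_const y
  exact h1.prodMk (h2.prodMk (hasDerivAt_const s t))

lemma seg_horiz (x y : Fin n → ℝ) (t : ℝ) : IsHorizontal (seg x y t) (-1) 1 := by
  refine ⟨by norm_num, ⟨‖((x, y, 0) : Hpt n)‖₊, ?_⟩, fun _ => (x, y, 0), ?_, ?_⟩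
  · exact (convex_Icc _ _).lipschitzOnWith_of_nnnorm_hasDerivWithin_le
      (fun s _ => (seg_deriv x y t s).hasDerivWithinAt) (fun s _ => le_rfl)
  · exact Filter.Eventually.of_forall fun s => seg_deriv x y t s
  · refine Filter.Eventually.of_forall fun s => ?_
    simp only [seg]
    rw [Finset.sum_eq_zero]
    · simp
    · intro j _
      simp; ring

lemma seg_geod (x y : Fin n → ℝ) (t : ℝ) : IsGeodesicOn (seg x y t) (-1) 1 := by
  refine ⟨seg_horiz x y t, le_antisymm ?_ (ccDist_le_hLength (seg_horiz x y t))⟩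
  refine le_trans ?_ (edist_le_ccDist _ _)
  set v := hproj ((x, y, t) : Hpt n) with hv
  have hL : LipschitzOnWith ‖v‖₊ (fun s : ℝ => s • v) univ := by
    refine LipschitzOnWith.of_dist_le_mul fun a _ b _ => ?_
    rw [dist_eq_norm, dist_eq_norm, ← sub_smul, norm_smul, mul_comm]
    rfl
  have h1 := hL.comp_eVariationOn_le (g := (id : ℝ → ℝ)) (s := Icc (-1:ℝ) 1)
    (fun _ _ => mem_univ _)
  have h2 : eVariationOn (id : ℝ → ℝ) (Icc (-1:ℝ) 1) ≤ ENNReal.ofReal (1 - -1) := by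
    have := (monotone_id.monotoneOn (Icc (-1:ℝ) 1)).eVariationOn_le
      (left_mem_Icc.2 (by norm_num)) (right_mem_Icc.2 (by norm_num))
    simpa using this
  have h3 : hLength (seg x y t) (-1) 1 = eVariationOn ((fun s : ℝ => s • v) ∘ id)
      (Icc (-1:ℝ) 1) := by
    simp only [hLength, hproj_seg]; rfl
  rw [h3]
  refine h1.trans ((mul_le_mul_right h2 _).trans ?_)
  rw [hproj_seg, hproj_seg, edist_dist, dist_eq_norm, ← sub_smul, norm_smul, ← hv,
    ENNReal.ofReal_mul (norm_nonneg _), mul_comm]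
  have : ENNReal.ofReal ‖v‖ = (‖v‖₊ : ℝ≥0∞) := ofReal_norm_eq_enorm v
  rw [this]
  norm_num

lemma exists_U_unit (v w : EuclideanSpace ℂ (Fin n)) (hv : ‖v‖ = 1) (hw : ‖w‖ = 1) :
    ∃ U : EuclideanSpace ℂ (Fin n) ≃ₗᵢ[ℂ] EuclideanSpace ℂ (Fin n), U v = w := by
  let ev := LinearIsometryEquiv.toSpanUnitSingleton (𝕜 := ℂ) v hv
  let ew := LinearIsometryEquiv.toSpanUnitSingleton (𝕜 := ℂ) w hw
  let L := (Submodule.subtypeₗᵢ _).comp (ew.toLinearIsometry.comp ev.symm.toLinearIsometry)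
  refine ⟨L.extend.toLinearIsometryEquiv rfl, ?_⟩
  have h1 : ev 1 = ⟨v, Submodule.mem_span_singleton_self v⟩ := by
    ext1; simp [ev]
  have := L.extend_apply ⟨v, Submodule.mem_span_singleton_self v⟩
  rw [LinearIsometry.coe_toLinearIsometryEquiv]
  refine this.trans ?_
  rw [← h1]
  simp [L, ew]

lemma exists_U (v w : EuclideanSpace ℂ (Fin n)) (h : ‖w‖ ≤ ‖v‖) :
    ∃ (U : EuclideanSpace ℂ (Fin n) ≃ₗᵢ[ℂ] EuclideanSpace ℂ (Fin n)) (r : ℝ),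
      r ∈ Icc (-1:ℝ) 1 ∧ w = (r : ℂ) • U v := by
  by_cases hw : w = 0
  · exact ⟨LinearIsometryEquiv.refl ℂ _, 0, by norm_num, by simp [hw]⟩
  have hw' : 0 < ‖w‖ := norm_pos_iff.2 hw
  have hv' : 0 < ‖v‖ := hw'.trans_le h
  have hv : v ≠ 0 := norm_pos_iff.1 hv'
  obtain ⟨U, hU⟩ := exists_U_unit (((‖v‖ : ℂ)⁻¹) • v) (((‖w‖ : ℂ)⁻¹) • w)
    (norm_smul_inv_norm hv) (norm_smul_inv_norm hw)
  refine ⟨U, ‖w‖ / ‖v‖, ⟨?_, ?_⟩, ?_⟩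
  · have : 0 ≤ ‖w‖ / ‖v‖ := by positivity
    linarith
  · exact (div_le_one hv').2 h
  · rw [map_smul] at hU
    have hc : (‖w‖ : ℂ) ≠ 0 := by exact_mod_cast hw'.ne'
    push_cast
    rw [div_eq_mul_inv, mul_smul, hU, smul_smul, mul_inv_cancel₀ hc, one_smul]

end HAux

/-- If `(z₀,t₀) ∈ G¹(A)` then every point `(z,t₀)` with `‖z‖ ≤ ‖z₀‖`
belongs to `G²(A)`: the solid Heisenberg bubble is contained in `G²(A)`. -/
theorem stmt_10 (n : ℕ) (hn : 1 ≤ n) (T₀ : ℝ) (hT : 0 < T₀)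
    (x₀ y₀ : Fin n → ℝ) (t₀ : ℝ)
    (h : ((x₀, y₀, t₀) : Hpt n) ∈ Gm ({((0 : Fin n → ℝ), (0 : Fin n → ℝ), (0 : ℝ)),
      ((0 : Fin n → ℝ), (0 : Fin n → ℝ), T₀)} : Set (Hpt n)) 1)
    (x y : Fin n → ℝ)
    (hz : ∑ i, (x i ^ 2 + y i ^ 2) ≤ ∑ i, (x₀ i ^ 2 + y₀ i ^ 2)) :
    ((x, y, t₀) : Hpt n) ∈ Gm ({((0 : Fin n → ℝ), (0 : Fin n → ℝ), (0 : ℝ)),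
      ((0 : Fin n → ℝ), (0 : Fin n → ℝ), T₀)} : Set (Hpt n)) 2 := by
  obtain ⟨U, r, hr, hw⟩ := HAux.exists_U (HAux.toC ((x₀, y₀, t₀) : Hpt n))
    (HAux.toC ((x, y, t₀) : Hpt n)) (by
      rw [← sq_le_sq₀ (norm_nonneg _) (norm_nonneg _), HAux.normsq_eq, HAux.normsq_eq]
      exact hz)
  have key : ∀ V : EuclideanSpace ℂ (Fin n) ≃ₗᵢ[ℂ] EuclideanSpace ℂ (Fin n),
      HAux.Phi V ((x₀, y₀, t₀) : Hpt n) ∈ Gm ({((0 : Fin n → ℝ), (0 : Fin n → ℝ), (0 : ℝ)),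
      ((0 : Fin n → ℝ), (0 : Fin n → ℝ), T₀)} : Set (Hpt n)) 1 := by
    intro V
    refine HAux.geodJoin_Phi V ?_ h
    have h0 : ∀ t : ℝ, HAux.Phi V (((0 : Fin n → ℝ), (0 : Fin n → ℝ), t) : Hpt n)
        = ((0 : Fin n → ℝ), (0 : Fin n → ℝ), t) := by
      intro t
      have : HAux.toC (((0 : Fin n → ℝ), (0 : Fin n → ℝ), t) : Hpt n) = 0 := by
        ext i; apply Complex.ext <;> simp [HAux.toC]
      rw [HAux.Phi_apply, this, map_zero]
      ext <;> simp [HAux.ofC]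
    intro p hp
    rcases hp with hp | hp
    · left; rw [hp]; exact h0 0
    · right; rw [hp]; exact h0 T₀
  obtain ⟨a, ha⟩ : ∃ a, a = HAux.Phi U ((x₀, y₀, t₀) : Hpt n) := ⟨_, rfl⟩
  have hat : a.2.2 = t₀ := by rw [ha]; rfl
  have haC : HAux.toC a = U (HAux.toC ((x₀, y₀, t₀) : Hpt n)) := by rw [ha, HAux.toC_Phi]
  refine ⟨HAux.seg a.1 a.2.1 t₀ (-1), ?_, HAux.seg a.1 a.2.1 t₀ 1, ?_, HAux.seg a.1 a.2.1 t₀,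
    -1, 1, HAux.seg_geod _ _ _, rfl, rfl, r, hr, ?_⟩
  · have := key (U.trans (LinearIsometryEquiv.neg ℂ))
    convert this using 1
    rw [HAux.Phi_apply]
    simp only [LinearIsometryEquiv.trans_apply, LinearIsometryEquiv.coe_neg, ← haC]
    ext <;> simp [HAux.ofC, HAux.seg, HAux.toC]
  · have := key U
    rw [← ha] at this
    convert this using 1
    ext <;> simp [HAux.seg, hat]
  · rw [← haC] at hw
    rw [← HAux.ofC_toC ((x, y, t₀) : Hpt n), hw]
    ext <;> simp [HAux.ofC, HAux.seg, HAux.toC]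
end
end
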